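/- arXiv:1404.1641 — 2 statements merged into one kernel-verified Lean document; each statement's English description precedes it below -/
import Mathlib

section
/- Given an exterior splash S on a fixed line of PG(2,q^3), the number of order-q-subplanes having exterior splash S is 2q^6(q^3-1). Equivalently: the number of order-q-subplanes exterior to a fixed line is q^9(q^3-1)(q^3+1)(q-1), the number of exterior splashes on a fixed line is (1/2)q^3(q^3+1)(q-1), and the group of homographies fixing the line is transitive on subplanes exterior to it. -/
/-!
Every homography fixing the line `u` is represented by exactly one matrix in the group `U` of
matrices that fix the covector `u`. A subplane `g` is exterior to `u` if and only if the entries of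
`u g` form a basis of `F` over `k`. Any two bases differ by a matrix over `k`, so `U` is transitive
on exterior subplanes, hence on exterior splashes, and the three counts are orbit lengths.

The stabilizer in `U` of an exterior subplane is its Singer group `Fˣ / kˣ`, of order `q² + q + 1`;
it also fixes the splash. For the stabilizer of the splash, take the Moore matrix of the basis `u g`
as coordinate change: the splash becomes the set of points `(0 : x : y)` with `N x + N y = 0`, where
`N` is the norm of `F` over `k`. If `(x, y) ↦ (α x + β y, γ x + δ y)` preserves this set, then
`N (α t - β) + N (γ t - δ)` vanishes whenever `N t = 1`, that is, at all roots of unity of order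
`q² + q + 1`. This is a polynomial of that degree in `t`, so its intermediate coefficients vanish,
and comparing them forces the map to be diagonal or antidiagonal with two nonzero entries of equal
norm. There are therefore `2 q⁶ (q³ - 1) (q² + q + 1)` elements of `U` that fix the splash.
-/

open Matrix

/-- The point of PG(2,q^3) represented by `x` lies on the line with covector `u`. -/
def OnCov (F : Type) [Field F] (x : Projectivization F (Fin 3 → F))
    (u : Fin 3 → F) : Prop :=
  ∑ i, u i * x.rep i = 0

/-- The order-q-subplane of PG(2,q^3): the image of the canonical subplane PG(2,q)
under the homography induced by g ∈ GL(3,q^3). -/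
def Subplane (k F : Type) [Field k] [Field F] [Algebra k F]
    (g : GL (Fin 3) F) : Set (Projectivization F (Fin 3 → F)) :=
  {x | ∃ v : Fin 3 → k, v ≠ 0 ∧ ∃ c : F, c ≠ 0 ∧
    x.rep = c • (g : Matrix (Fin 3) (Fin 3) F).mulVec (fun i => algebraMap k F (v i))}

/-- The subplane of g is exterior to the line with covector u. -/
def ExteriorTo (k F : Type) [Field k] [Field F] [Algebra k F]
    (g : GL (Fin 3) F) (u : Fin 3 → F) : Prop :=
  ∀ x ∈ Subplane k F g, ¬ OnCov F x u

/-- The exterior splash of the subplane of g onto the line with covector u: the points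
of that line lying on an extended line of the subplane (lines of the subplane are the
images under g of lines of PG(2,q), with covectors w ↦ w · g⁻¹). -/
def SplashOf (k F : Type) [Field k] [Field F] [Algebra k F]
    (g : GL (Fin 3) F) (u : Fin 3 → F) : Set (Projectivization F (Fin 3 → F)) :=
  {x | OnCov F x u ∧ ∃ w : Fin 3 → k, w ≠ 0 ∧
    OnCov F x (Matrix.vecMul (fun i => algebraMap k F (w i))
      ((g⁻¹ : GL (Fin 3) F) : Matrix (Fin 3) (Fin 3) F))}

lemma geom_sum_three_mul (q : ℕ) : (q ^ 2 + q + 1) * (q - 1) = q ^ 3 - 1 := by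
  rcases q with _ | m
  · rfl
  · rw [Nat.add_sub_cancel]
    exact (Nat.sub_eq_of_eq_add (by ring)).symm

lemma norm_neg_of_odd_finrank {k F : Type*} [Field k] [Field F] [Algebra k F]
    (hodd : Odd (Module.finrank k F)) (x : F) : Algebra.norm k (-x) = -Algebra.norm k x := by
  rw [← neg_one_mul, map_mul, ← map_one (algebraMap k F), ← map_neg, Algebra.norm_algebraMap,
    hodd.neg_one_pow, neg_one_mul]

section Norm

open FiniteField

variable {k F : Type*} [Field k] [Field F] [Fintype k] [Finite F] [Algebra k F]

local notation "σ" => frobeniusAlgHom k F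

lemma ncard_setOf_norm_eq_one_mul :
    {x : F | Algebra.norm k x = 1}.ncard * (Fintype.card k - 1) = Nat.card F - 1 := by
  have himage : {x : F | Algebra.norm k x = 1} =
      Units.val '' ((Units.map (Algebra.norm k (S := F))).ker : Set Fˣ) := by
    ext x
    refine ⟨fun hx => ?_, ?_⟩
    · have hx0 : x ≠ 0 := by rintro rfl; simp [Algebra.norm_zero] at hx
      exact ⟨Units.mk0 x hx0, Units.ext hx, rfl⟩
    · rintro ⟨y, hy, rfl⟩
      exact congrArg Units.val hy
  have hmul := (Units.map (Algebra.norm k (S := F))).ker.card_mul_index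
  rwa [Subgroup.index_ker, MonoidHom.range_eq_top.2 (unitsMap_norm_surjective k F),
    Subgroup.card_top, Nat.card_units, Nat.card_units, Nat.card_eq_fintype_card (α := k),
    ← SetLike.coe_sort_coe, Nat.card_coe_set_eq,
    ← Set.ncard_image_of_injective _ Units.val_injective, ← himage] at hmul

lemma ncard_setOf_norm_eq_one (hr : Module.finrank k F = 3) :
    {x : F | Algebra.norm k x = 1}.ncard = Fintype.card k ^ 2 + Fintype.card k + 1 := by
  have hmul := ncard_setOf_norm_eq_one_mul (k := k) (F := F)
  rw [Module.natCard_eq_pow_finrank (K := k) (V := F), hr, Nat.card_eq_fintype_card,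
    ← geom_sum_three_mul] at hmul
  exact Nat.eq_of_mul_eq_mul_right (Nat.sub_pos_of_lt Fintype.one_lt_card) hmul

lemma frobeniusAlgHom_iterate_three (hr : Module.finrank k F = 3) (x : F) :
    σ (σ (σ x)) = x := by
  have h := pow_orderOf_eq_one σ
  rw [orderOf_frobeniusAlgHom, hr] at h
  exact DFunLike.congr_fun h x

lemma algebraMap_norm_eq_mul_frobenius (hr : Module.finrank k F = 3) (x : F) :
    algebraMap k F (Algebra.norm k x) = x * σ x * σ (σ x) := by
  rw [algebraMap_norm_eq_prod_pow, hr, Nat.card_eq_fintype_card]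
  simp only [Finset.prod_range_succ, Finset.prod_range_zero, coe_frobeniusAlgHom]
  ring

lemma algebraMap_norm_eq_pow_sum (hr : Module.finrank k F = 3) (x : F) :
    algebraMap k F (Algebra.norm k x) = x ^ (Fintype.card k ^ 2 + Fintype.card k + 1) := by
  rw [algebraMap_norm_eq_mul_frobenius hr]
  simp only [coe_frobeniusAlgHom]
  ring

end Norm

section Polynomial

open Polynomial

lemma coeff_eq_zero_of_eval_rootsOfUnity_eq_zero {R : Type*} [CommRing R] [IsDomain R]
    {p : R[X]} {m j : ℕ} (hp : p.natDegree ≤ m) {s : Finset R} (hs : s.card = m)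
    (hpow : ∀ t ∈ s, t ^ m = 1) (heval : ∀ t ∈ s, p.eval t = 0) (hj : j ≠ 0) (hjm : j < m) :
    p.coeff j = 0 := by
  have hm : m ≠ 0 := by lia
  set r := p - C (p.coeff m) * (X ^ m - 1) with hr
  have hcoeff (i : ℕ) (hi : i ≠ 0) : r.coeff i = p.coeff i - if i = m then p.coeff m else 0 := by
    simp [hr, coeff_X_pow, coeff_one, hi]
  have hdeg : r.natDegree < m := by
    refine Nat.lt_of_le_sub_one (by lia) (natDegree_le_iff_coeff_eq_zero.2 fun i hi => ?_)
    have hi : m ≤ i := by lia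
    rw [hcoeff i (by lia)]
    split_ifs with h
    · rw [h, sub_self]
    · rw [coeff_eq_zero_of_natDegree_lt (by lia), sub_zero]
  have hr0 : r = 0 := eq_zero_of_natDegree_lt_card_of_eval_eq_zero' r s
    (fun t ht => by simp [hr, heval t ht, hpow t ht]) (hs ▸ hdeg)
  simpa [hr0, hjm.ne] using (hcoeff j hj).symm

end Polynomial

section NormPolynomial

open FiniteField Polynomial

variable {k F : Type*} [Field k] [Field F] [Fintype k] [Algebra k F]

local notation "σ" => frobeniusAlgHom k F

variable (k) in
/-- The polynomial whose value at `t` is the norm of `a * t + b`. -/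
noncomputable def normPoly (a b : F) : F[X] :=
  (C a * X + C b) * (C (σ a) * X ^ Fintype.card k + C (σ b)) *
    (C (σ (σ a)) * X ^ Fintype.card k ^ 2 + C (σ (σ b)))

lemma eval_normPoly [Finite F] (hr : Module.finrank k F = 3) (a b t : F) :
    (normPoly k a b).eval t = algebraMap k F (Algebra.norm k (a * t + b)) := by
  have h1 : t ^ Fintype.card k = σ t := rfl
  have h2 : t ^ Fintype.card k ^ 2 = σ (σ t) := by simp only [coe_frobeniusAlgHom]; ring
  simp only [normPoly, algebraMap_norm_eq_mul_frobenius hr, eval_mul, eval_add, eval_C, eval_X,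
    eval_pow, h1, h2, map_add, map_mul]

lemma normPoly_eq (a b : F) :
    normPoly k a b = C (b * σ b * σ (σ b)) + C (a * σ b * σ (σ b)) * X ^ 1 +
      C (b * σ a * σ (σ b)) * X ^ Fintype.card k +
      C (a * σ a * σ (σ b)) * X ^ (Fintype.card k + 1) +
      C (b * σ b * σ (σ a)) * X ^ Fintype.card k ^ 2 +
      C (a * σ b * σ (σ a)) * X ^ (Fintype.card k ^ 2 + 1) +
      C (b * σ a * σ (σ a)) * X ^ (Fintype.card k ^ 2 + Fintype.card k) +
      C (a * σ a * σ (σ a)) * X ^ (Fintype.card k ^ 2 + Fintype.card k + 1) := by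
  simp only [normPoly, C_mul, pow_add, pow_one]
  ring

lemma natDegree_normPoly_le (a b : F) :
    (normPoly k a b).natDegree ≤ Fintype.card k ^ 2 + Fintype.card k + 1 := by
  unfold normPoly
  compute_degree
  lia

lemma coeff_one_normPoly (a b : F) : (normPoly k a b).coeff 1 = a * σ b * σ (σ b) := by
  have hq : 1 < Fintype.card k := Fintype.one_lt_card
  have hqq : 1 < Fintype.card k ^ 2 := Nat.one_lt_pow two_ne_zero hq
  simp only [normPoly_eq, coeff_add, coeff_C_mul, coeff_X_pow, coeff_C]
  simp [hq.ne, hqq.ne, show 1 ≠ Fintype.card k ^ 2 + Fintype.card k by lia]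

lemma coeff_card_add_one_normPoly (a b : F) :
    (normPoly k a b).coeff (Fintype.card k + 1) = a * σ a * σ (σ b) := by
  have hq : 2 ≤ Fintype.card k := Fintype.one_lt_card
  have hqq : Fintype.card k + 1 < Fintype.card k ^ 2 := by nlinarith
  simp only [normPoly_eq, coeff_add, coeff_C_mul, coeff_X_pow, coeff_C]
  simp [hqq.ne, show Fintype.card k ≠ 0 by lia,
    show Fintype.card k + 1 ≠ Fintype.card k ^ 2 + Fintype.card k by lia,
    show Fintype.card k ≠ Fintype.card k ^ 2 by lia]

lemma coeff_relations_of_norm_add_norm_eq_zero [Finite F] (hr : Module.finrank k F = 3)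
    {α β γ δ : F} (h : ∀ t : F, Algebra.norm k t = 1 →
      Algebra.norm k (α * t + β) + Algebra.norm k (γ * t + δ) = 0) :
    α * σ β * σ (σ β) + γ * σ δ * σ (σ δ) = 0 ∧
      α * σ α * σ (σ β) + γ * σ γ * σ (σ δ) = 0 := by
  have hq : 2 ≤ Fintype.card k := Fintype.one_lt_card
  have hfin := Set.toFinite {t : F | Algebra.norm k t = 1}
  have hcoeff {j : ℕ} (hj : j ≠ 0) (hjm : j < Fintype.card k ^ 2 + Fintype.card k + 1) :
      (normPoly k α β).coeff j + (normPoly k γ δ).coeff j = 0 := by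
    rw [← coeff_add]
    refine coeff_eq_zero_of_eval_rootsOfUnity_eq_zero (s := hfin.toFinset)
      (natDegree_add_le_of_degree_le (natDegree_normPoly_le α β) (natDegree_normPoly_le γ δ))
      ?_ (fun t ht => ?_) (fun t ht => ?_) hj hjm
    · rw [← Set.ncard_eq_toFinset_card _ hfin, ncard_setOf_norm_eq_one hr]
    · rw [← algebraMap_norm_eq_pow_sum hr, hfin.mem_toFinset.1 ht, map_one]
    · rw [eval_add, eval_normPoly hr, eval_normPoly hr, ← map_add,
        h t (hfin.mem_toFinset.1 ht), map_zero]
  have hq1 : Fintype.card k + 1 < Fintype.card k ^ 2 + Fintype.card k + 1 := by nlinarith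
  refine ⟨?_, ?_⟩
  · simpa only [coeff_one_normPoly] using hcoeff one_ne_zero (by lia)
  · simpa only [coeff_card_add_one_normPoly] using hcoeff (Nat.succ_ne_zero _) hq1

lemma det_eq_zero_of_norm_relations [Finite F] (hr : Module.finrank k F = 3) {α β γ δ : F}
    (hα : α ≠ 0) (hβ : β ≠ 0) (hγ : γ ≠ 0) (hδ : δ ≠ 0)
    (h₁ : α * σ β * σ (σ β) + γ * σ δ * σ (σ δ) = 0)
    (h₂ : α * σ α * σ (σ β) + γ * σ γ * σ (σ δ) = 0) : α * δ = β * γ := by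
  set N : F → k := fun x => Algebra.norm k x with hN
  have hinj := FaithfulSMul.algebraMap_injective k F
  have hNF (x : F) : algebraMap k F (N x) = x * σ x * σ (σ x) :=
    algebraMap_norm_eq_mul_frobenius hr x
  have hne {x : F} (hx : x ≠ 0) : N x ≠ 0 := Algebra.norm_ne_zero_iff.2 hx
  have hNk (a : k) : N (algebraMap k F a) = a ^ 3 := by simp [hN, Algebra.norm_algebraMap, hr]
  have hneg := norm_neg_of_odd_finrank (hr ▸ Nat.odd_iff.2 rfl : Odd (Module.finrank k F))
  have e₁ : algebraMap k F (N β) * (α * δ) = -(algebraMap k F (N δ) * (β * γ)) := by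
    rw [hNF, hNF]
    linear_combination β * δ * h₁
  have e₂ : algebraMap k F (N α) * (β * γ) = -(algebraMap k F (N γ) * (α * δ)) := by
    have h₂' := congrArg σ h₂
    simp only [map_add, map_mul, map_zero, frobeniusAlgHom_iterate_three hr] at h₂'
    rw [hNF, hNF]
    linear_combination α * γ * h₂'
  have e₃ : N α * N β = N γ * N δ := by
    apply hinj
    apply mul_left_cancel₀ (mul_ne_zero (mul_ne_zero hα hδ) (mul_ne_zero hβ hγ))
    simp only [map_mul]
    linear_combination algebraMap k F (N α) * (β * γ) * e₁ -
      algebraMap k F (N δ) * (β * γ) * e₂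
  have e₄ : N α * N β ^ 2 = -(N γ * N δ ^ 2) := by
    have h := congrArg N e₁
    simp only [hN, hneg, map_mul] at h
    simp only [← hN, hNk] at h
    apply mul_left_cancel₀ (mul_ne_zero (hne hβ) (hne hδ))
    linear_combination h
  have e₅ : N β = -N δ := by
    apply mul_left_cancel₀ (mul_ne_zero (hne hγ) (hne hδ))
    linear_combination e₄ - N β * e₃
  apply mul_left_cancel₀ ((map_ne_zero_iff _ hinj).2 (hne hβ))
  rw [e₁, e₅, map_neg, neg_mul]

end NormPolynomial

section Monomial

open FiniteField

variable {k F : Type*} [Field k] [Field F] [Algebra k F]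

local notation "σ" => frobeniusAlgHom k F

lemma monomial_of_norm_add_norm_eq_zero [Finite F] (hr : Module.finrank k F = 3) {α β γ δ : F}
    (hdet : α * δ ≠ β * γ)
    (h : ∀ x y : F, Algebra.norm k x + Algebra.norm k y = 0 →
      Algebra.norm k (α * x + β * y) + Algebra.norm k (γ * x + δ * y) = 0) :
    (β = 0 ∧ γ = 0 ∧ Algebra.norm k α = Algebra.norm k δ) ∨
      (α = 0 ∧ δ = 0 ∧ Algebra.norm k β = Algebra.norm k γ) := by
  have : Finite k := .of_injective _ (algebraMap k F).injective
  have := Fintype.ofFinite k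
  have hneg := norm_neg_of_odd_finrank (hr ▸ Nat.odd_iff.2 rfl : Odd (Module.finrank k F))
  obtain ⟨h₁, h₂⟩ := coeff_relations_of_norm_add_norm_eq_zero hr (α := α) (β := -β) (γ := γ)
    (δ := -δ) fun t ht => by simpa using h t (-1) (by simp [ht, hneg])
  simp only [map_neg, mul_neg, neg_mul, neg_neg] at h₁ h₂
  have h₂ : α * σ α * σ (σ β) + γ * σ γ * σ (σ δ) = 0 := by linear_combination -h₂
  have h₃ := h 1 (-1) (by simp [hneg])
  by_cases hα : α = 0
  · have hβγ : β ≠ 0 ∧ γ ≠ 0 := by simpa [hα] using hdet.symm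
    have hδ : δ = 0 := by simpa [hα, hβγ.2] using h₁
    refine .inr ⟨hα, hδ, ?_⟩
    simpa [hα, hδ, hneg, neg_add_eq_zero] using h₃
  by_cases hβ : β = 0
  · have hδ : δ ≠ 0 := by rintro rfl; simp [hβ] at hdet
    have hγ : γ = 0 := by simpa [hβ, hδ] using h₂
    refine .inl ⟨hβ, hγ, ?_⟩
    simpa [hβ, hγ, hneg, add_neg_eq_zero] using h₃
  have hγδ : γ ≠ 0 ∧ δ ≠ 0 := by
    refine ⟨?_, ?_⟩ <;> rintro rfl <;> simp [hα, hβ] at h₁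
  exact absurd (det_eq_zero_of_norm_relations hr hα hβ hγδ.1 hγδ.2 h₁ h₂) hdet

end Monomial

section Moore

open FiniteField

variable {k F : Type*} [Field k] [Field F] [Fintype k] [Algebra k F] {n : ℕ}

local notation "σ" => frobeniusAlgHom k F

variable (k) in
/-- The Moore matrix of a vector over `F`: row `i` is its image under the `i`-th power of the
Frobenius automorphism of `F` over `k`. -/
def mooreMatrix (a : Fin n → F) : Matrix (Fin n) (Fin n) F :=
  of fun i j => (σ ^ (i : ℕ)) (a j)

lemma mooreMatrix_three (a : Fin 3 → F) :
    mooreMatrix k a = !![a 0, a 1, a 2; σ (a 0), σ (a 1), σ (a 2);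
      σ (σ (a 0)), σ (σ (a 1)), σ (σ (a 2))] := by
  ext i j
  fin_cases i <;> fin_cases j <;> rfl

variable [Finite F]

lemma linearIndependent_frobeniusAlgHom_pow (hn : Module.finrank k F = n) :
    LinearIndependent F fun i : Fin n => (σ ^ (i : ℕ)).toLinearMap := by
  subst hn
  exact (linearIndependent_algHom_toLinearMap k F F).comp _
    (bijective_frobeniusAlgHom_pow k F).injective

lemma det_mooreMatrix_ne_zero_iff (hn : Module.finrank k F = n) (a : Fin n → F) :
    (mooreMatrix k a).det ≠ 0 ↔ LinearIndependent k a := by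
  refine ⟨fun hdet => ?_, fun ha hdet => ?_⟩
  · rw [Fintype.linearIndependent_iff]
    intro w hw
    have hmul : mooreMatrix k a *ᵥ (fun j => algebraMap k F (w j)) = 0 := by
      ext i
      have h := congrArg (σ ^ (i : ℕ)) hw
      simp only [map_sum, map_smul, map_zero] at h
      simpa only [mooreMatrix, mulVec, dotProduct, of_apply, Algebra.smul_def, mul_comm,
        Pi.zero_apply] using h
    have hw0 := eq_zero_of_mulVec_eq_zero hdet hmul
    exact fun i => (map_eq_zero _).1 (congrFun hw0 i)
  · have : Nonempty (Fin n) := Fin.pos_iff_nonempty.1 (hn ▸ Module.finrank_pos)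
    obtain ⟨c, hc, hcM⟩ := exists_vecMul_eq_zero_iff.2 hdet
    let b := basisOfLinearIndependentOfCardEqFinrank ha (by rw [hn, Fintype.card_fin])
    have hsum : ∑ i, c i • (σ ^ (i : ℕ)).toLinearMap = 0 := by
      refine b.ext fun j => ?_
      have hj := congrFun hcM j
      simp only [vecMul, dotProduct, mooreMatrix, of_apply, Pi.zero_apply] at hj
      simpa only [b, coe_basisOfLinearIndependentOfCardEqFinrank, LinearMap.sum_apply,
        LinearMap.smul_apply, AlgHom.toLinearMap_apply, smul_eq_mul, LinearMap.zero_apply] using hj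
    have hli := linearIndependent_frobeniusAlgHom_pow (k := k) (F := F) hn
    exact hc (funext (Fintype.linearIndependent_iff.1 hli c hsum))

-- The `(i, j)` entry of `mooreMatrix k a * (mooreMatrix k y)ᵀ` is `σ ^ j (z (i - j))` for
-- `z = mooreMatrix k a *ᵥ y`, indices being taken modulo 3.
lemma det_mooreMatrix_mul_det_mooreMatrix (hr : Module.finrank k F = 3) (a y : Fin 3 → F)
    (hay : a ⬝ᵥ y = 0) :
    (mooreMatrix k a).det * (mooreMatrix k y).det =
      algebraMap k F (Algebra.norm k ((mooreMatrix k a *ᵥ y) 1) +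
        Algebra.norm k ((mooreMatrix k a *ᵥ y) 2)) := by
  set z := mooreMatrix k a *ᵥ y with hz
  have h3 := frobeniusAlgHom_iterate_three (k := k) (F := F) hr
  have hgram : mooreMatrix k a * (mooreMatrix k y)ᵀ =
      !![0, σ (z 2), σ (σ (z 1)); z 1, 0, σ (σ (z 2)); z 2, σ (z 1), 0] := by
    have hay : a 0 * y 0 + a 1 * y 1 + a 2 * y 2 = 0 := by
      rwa [dotProduct, Fin.sum_univ_three] at hay
    have hσ := congrArg σ hay
    have hσσ := congrArg σ hσ
    simp only [map_add, map_mul, map_zero] at hσ hσσ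
    ext i j
    fin_cases i <;> fin_cases j <;>
      simp [hz, mooreMatrix_three, mul_apply, dotProduct, Fin.sum_univ_three, h3, hay, hσ,
        hσσ, -frobeniusAlgHom_apply]
  rw [← det_transpose (mooreMatrix k y), ← det_mul, hgram, det_fin_three, map_add,
    algebraMap_norm_eq_mul_frobenius hr, algebraMap_norm_eq_mul_frobenius hr]
  simp only [of_apply, cons_val', cons_val_zero, cons_val_fin_one, cons_val_one, mul_zero,
    cons_val, zero_mul, sub_self, zero_add, sub_zero]
  ring

end Moore

section GroupAction

open MulAction

lemma ncard_orbit_mul_natCard_inf_stabilizer {G X : Type*} [Group G] [MulAction G X]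
    (K : Subgroup G) (x : X) :
    (orbit K x).ncard * Nat.card (K ⊓ stabilizer G x : Subgroup G) = Nat.card K := by
  have hmap : (stabilizer K x).map K.subtype = K ⊓ stabilizer G x := by
    ext g
    simp [mem_stabilizer_iff, Subgroup.smul_def, and_comm]
  rw [← hmap, Subgroup.card_map_of_injective K.subtype_injective, ← index_stabilizer, mul_comm,
    Subgroup.card_mul_index]

end GroupAction

section Covector

open MulAction

variable {n R K : Type*} [Fintype n] [DecidableEq n] [CommRing R] [Field K]

/-- The group of homographies of the space that fix a covector `u`, hence the hyperplane with
equation `u`. -/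
def covectorStabilizer (u : n → R) : Subgroup (GL n R) where
  carrier := {g | u ᵥ* g.1 = u}
  one_mem' := vecMul_one u
  mul_mem' {g h} hg hh := by
    rw [Set.mem_ofPred_eq] at hg hh ⊢
    rw [Units.val_mul, ← vecMul_vecMul, hg, hh]
  inv_mem' {g} hg := by
    rw [Set.mem_ofPred_eq] at hg ⊢
    nth_rw 1 [← hg]
    rw [vecMul_vecMul, ← Units.val_mul, mul_inv_cancel, Units.val_one, vecMul_one]

lemma mem_covectorStabilizer {u : n → R} {g : GL n R} :
    g ∈ covectorStabilizer u ↔ u ᵥ* g.1 = u := Iff.rfl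

lemma covectorStabilizer_vecMul (u : n → R) (g : GL n R) :
    (covectorStabilizer (u ᵥ* g.1)).map (MulAut.conj g).toMonoidHom = covectorStabilizer u := by
  ext h
  rw [Subgroup.mem_map_equiv, mem_covectorStabilizer, mem_covectorStabilizer,
    MulAut.conj_symm_apply, vecMul_vecMul, ← Units.val_mul, ← mul_assoc, mul_inv_cancel_left,
    Units.val_mul, ← vecMul_vecMul]
  exact (vecMul_injective_of_isUnit g.isUnit).eq_iff

lemma natCard_covectorStabilizer_inf_stabilizer {X : Type*} [MulAction (GL n R) X] (u : n → R)
    (g : GL n R) (x : X) :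
    Nat.card (covectorStabilizer u ⊓ stabilizer (GL n R) (g • x) : Subgroup (GL n R)) =
      Nat.card (covectorStabilizer (u ᵥ* g.1) ⊓ stabilizer (GL n R) x : Subgroup (GL n R)) := by
  rw [← covectorStabilizer_vecMul u g, stabilizer_smul_eq_stabilizer_map_conj,
    ← Subgroup.map_inf _ _ _ (MulAut.conj g).injective,
    Subgroup.card_map_of_injective (MulAut.conj g).injective]

lemma exists_vecMul_eq {u v : n → K} (hu : u ≠ 0) (hv : v ≠ 0) : ∃ g : GL n K, u ᵥ* g.1 = v := by
  let f := (LinearEquiv.toSpanNonzeroSingleton K _ u hu).symm.trans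
    (LinearEquiv.toSpanNonzeroSingleton K _ v hv)
  obtain ⟨e, he⟩ := Submodule.exists_linearEquiv_restrict_eq f
  refine ⟨⟨(LinearMap.toMatrix' e)ᵀ, (LinearMap.toMatrix' e.symm)ᵀ, ?_, ?_⟩, ?_⟩
  · simp [← transpose_mul, ← LinearMap.toMatrix'_comp]
  · simp [← transpose_mul, ← LinearMap.toMatrix'_comp]
  · rw [vecMul_transpose, LinearMap.toMatrix'_mulVec]
    calc e u = f ⟨u, Submodule.mem_span_singleton_self u⟩ :=
          (he ⟨u, Submodule.mem_span_singleton_self u⟩).symm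
      _ = LinearEquiv.coord K _ u hu ⟨u, Submodule.mem_span_singleton_self u⟩ • v := rfl
      _ = v := by rw [LinearEquiv.coord_self, one_smul]

-- The opposite matrix ring turns the right action `u ᵥ* g` on row vectors into a left action.
lemma natCard_covectorStabilizer_mul [Finite K] {u : n → K} (hu : u ≠ 0) :
    Nat.card (covectorStabilizer u) * (Nat.card K ^ Fintype.card n - 1) = Nat.card (GL n K) := by
  let e : (Matrix n n K)ᵐᵒᵖˣ ≃ GL n K := Units.opEquiv.toEquiv.trans MulOpposite.opEquiv.symm
  have horbit : orbit (Matrix n n K)ᵐᵒᵖˣ u = {0}ᶜ := by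
    ext v
    refine ⟨?_, fun hv => ?_⟩
    · rintro ⟨g, rfl⟩
      exact (smul_ne_zero_iff_ne g).2 hu
    · obtain ⟨g, rfl⟩ := exists_vecMul_eq hu hv
      exact ⟨e.symm g, rfl⟩
  have hstab : Nat.card (stabilizer (Matrix n n K)ᵐᵒᵖˣ u) = Nat.card (covectorStabilizer u) :=
    Nat.card_congr (e.subtypeEquiv fun g => Iff.rfl)
  rw [← hstab, ← Nat.card_congr e, ← Subgroup.card_mul_index (stabilizer (Matrix n n K)ᵐᵒᵖˣ u),
    index_stabilizer, horbit, Set.ncard_compl, Set.ncard_singleton, Nat.card_fun,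
    Nat.card_eq_fintype_card (α := n)]

end Covector

section Embedding

variable {n k F : Type*} [Fintype n] [Field k] [Field F] [Algebra k F]

lemma linearIndependent_iff_dotProduct_ne_zero {a : n → F} :
    LinearIndependent k a ↔ ∀ w : n → k, w ≠ 0 → (algebraMap k F ∘ w) ⬝ᵥ a ≠ 0 := by
  simp only [Fintype.linearIndependent_iff, dotProduct, Function.comp_apply, ← Algebra.smul_def,
    ne_eq, not_imp_not, funext_iff, Pi.zero_apply]

variable [DecidableEq n]

variable (k F) in
/-- The homomorphism whose range consists of the invertible matrices with entries in `k`, up to a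
scalar of `F`; these induce the homographies that preserve the canonical subgeometry over `k`. -/
def scalarMulMap : Fˣ × GL n k →* GL n F :=
  (GeneralLinearGroup.scalar n).noncommCoprod (GeneralLinearGroup.map (algebraMap k F))
    fun c _ => GeneralLinearGroup.scalar_commute c _

lemma coe_scalarMulMap (p : Fˣ × GL n k) :
    (scalarMulMap k F p).1 = (p.1 : F) • p.2.1.map (algebraMap k F) := by
  ext i j
  simp [scalarMulMap, GeneralLinearGroup.map]

lemma scalarMulMap_mulVec (p : Fˣ × GL n k) (v : n → k) :
    (scalarMulMap k F p).1 *ᵥ (algebraMap k F ∘ v) =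
      (p.1 : F) • (algebraMap k F ∘ (p.2.1 *ᵥ v)) := by
  rw [coe_scalarMulMap, smul_mulVec]
  congr 1
  ext i
  exact (RingHom.map_mulVec _ _ _ i).symm

lemma linearIndependent_scalarMulMap_mulVec (p : Fˣ × GL n k) {a : n → F} :
    LinearIndependent k ((scalarMulMap k F p).1 *ᵥ a) ↔ LinearIndependent k a := by
  have hmap (w : n → k) : (algebraMap k F ∘ w) ⬝ᵥ ((scalarMulMap k F p).1 *ᵥ a) =
      (p.1 : F) * ((algebraMap k F ∘ (w ᵥ* p.2.1)) ⬝ᵥ a) := by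
    rw [coe_scalarMulMap, smul_mulVec, dotProduct_smul, smul_eq_mul, dotProduct_mulVec]
    congr 2
    ext i
    exact (RingHom.map_vecMul _ _ _ i).symm
  simp only [linearIndependent_iff_dotProduct_ne_zero, hmap, ne_eq, mul_eq_zero, p.1.ne_zero,
    false_or]
  refine ⟨fun h w hw => ?_, fun h w hw => h _ ?_⟩
  · simpa only [vecMul_vecMul, ← Units.val_mul, inv_mul_cancel, Units.val_one, vecMul_one] using
      h (w ᵥ* p.2⁻¹.1) ((vecMul_injective_of_isUnit p.2⁻¹.isUnit).ne_iff' (zero_vecMul _) |>.2 hw)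
  · exact (vecMul_injective_of_isUnit p.2.isUnit).ne_iff' (zero_vecMul _) |>.2 hw

lemma mem_range_scalarMulMap_of_eq_smul_map [Nonempty n] {H : GL n F} {d : F} {M : Matrix n n k}
    (h : H.1 = d • M.map (algebraMap k F)) : H ∈ (scalarMulMap k F).range := by
  have hdet : d ^ Fintype.card n * algebraMap k F M.det ≠ 0 := by
    rw [RingHom.map_det, RingHom.mapMatrix_apply, ← det_smul, ← h]
    exact H.det_ne_zero
  have hd : d ≠ 0 := ne_zero_pow Fintype.card_ne_zero (left_ne_zero_of_mul hdet)
  have hM : M.det ≠ 0 := fun h0 => by simp [h0] at hdet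
  refine ⟨(Units.mk0 d hd, GeneralLinearGroup.mkOfDetNeZero M hM), Units.ext ?_⟩
  rw [h]
  exact coe_scalarMulMap _

lemma exists_eq_map_mul_diagonal {H : Matrix n n F}
    (h : ∀ j, ∃ (d : F) (w : n → k), H.col j = d • (algebraMap k F ∘ w)) :
    ∃ (M : Matrix n n k) (c : n → F), H = M.map (algebraMap k F) * diagonal c := by
  choose c V hV using h
  refine ⟨of fun i j => V j i, c, ?_⟩
  ext i j
  simpa [mul_comm] using congrFun (hV j) i

-- The standard basis gives the columns of `H` up to scalars `c j`; the all-ones vector then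
-- forces the `c j` to agree up to factors in `k`.
lemma mem_range_scalarMulMap [Nonempty n] {H : GL n F}
    (h : ∀ v : n → k, v ≠ 0 → ∃ (d : F) (w : n → k),
      H.1 *ᵥ (algebraMap k F ∘ v) = d • (algebraMap k F ∘ w)) :
    H ∈ (scalarMulMap k F).range := by
  have hsingle (j : n) : algebraMap k F ∘ Pi.single j 1 = Pi.single j 1 := by
    ext i
    simp [Pi.single_apply, apply_ite]
  obtain ⟨M, c, hHM⟩ := exists_eq_map_mul_diagonal fun j => by
    simpa only [hsingle, mulVec_single_one] using
      h (Pi.single j 1) (Pi.single_ne_zero_iff.2 one_ne_zero)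
  obtain ⟨d, w, hw⟩ := h 1 one_ne_zero
  have hM : IsUnit M.det := by
    rw [isUnit_iff_ne_zero]
    intro h0
    refine H.det_ne_zero ?_
    rw [hHM, det_mul, ← RingHom.mapMatrix_apply, ← RingHom.map_det, h0, map_zero, zero_mul]
  have hc : c = d • (algebraMap k F ∘ (M⁻¹ *ᵥ w)) := by
    have hMc : M.map (algebraMap k F) *ᵥ c = d • (algebraMap k F ∘ w) := by
      rw [← hw, hHM, ← mulVec_mulVec]
      congr 1
      ext i
      simp [mulVec_diagonal]
    have hinv : M⁻¹.map (algebraMap k F) * M.map (algebraMap k F) = 1 := by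
      rw [← Matrix.map_mul, nonsing_inv_mul M hM, Matrix.map_one _ (map_zero _) (map_one _)]
    rw [← one_mulVec c, ← hinv, ← mulVec_mulVec, hMc, mulVec_smul]
    exact congrArg _ (funext fun i => (RingHom.map_mulVec _ _ _ i).symm)
  refine mem_range_scalarMulMap_of_eq_smul_map (d := d) (M := M * diagonal (M⁻¹ *ᵥ w)) ?_
  rw [hHM, hc]
  ext i j
  simp

end Embedding

section Singer

variable {n k F : Type*} [Fintype n] [DecidableEq n] [Field k] [Field F] [Algebra k F]
  (b : Module.Basis n k F)

lemma vecMul_map_eq_smul_iff {M : Matrix n n k} {c : F} :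
    ⇑b ᵥ* M.map (algebraMap k F) = c • ⇑b ↔ Algebra.leftMulMatrix b c = M := by
  have hcol (j : n) : (⇑b ᵥ* M.map (algebraMap k F)) j = b.equivFun.symm (M.col j) := by
    simp [vecMul, dotProduct, Algebra.smul_def, mul_comm]
  simp only [funext_iff, hcol, LinearEquiv.symm_apply_eq, ← Matrix.ext_iff]
  rw [forall_comm]
  simp only [Algebra.leftMulMatrix_eq_repr_mul, eq_comm (b := M _ _)]
  rfl

/-- Multiplication by `c` followed by multiplication by `c⁻¹`, where the first is taken over `k`
in the basis `b` and the second is an `F`-scalar. The image induces the Singer group of the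
canonical subgeometry over `k`, normalized to fix the covector `b`. -/
noncomputable def singerHom : Fˣ →* GL n F :=
  (scalarMulMap k F).comp
    ((invMonoidHom : Fˣ →* Fˣ).prod (Units.map (Algebra.leftMulMatrix b : F →* Matrix n n k)))

lemma coe_singerHom (c : Fˣ) :
    (singerHom b c).1 =
      (↑c⁻¹ : F) • (Algebra.leftMulMatrix b (c : F)).map (algebraMap k F) :=
  coe_scalarMulMap _

lemma vecMul_singerHom (c : Fˣ) : ⇑b ᵥ* (singerHom b c).1 = b := by
  rw [coe_singerHom, vecMul_smul, (vecMul_map_eq_smul_iff b).2 rfl, smul_smul, c.inv_mul, one_smul]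

lemma range_singerHom :
    (singerHom b).range = covectorStabilizer ⇑b ⊓ (scalarMulMap k F).range := by
  refine le_antisymm ?_ ?_
  · rintro _ ⟨c, rfl⟩
    exact ⟨vecMul_singerHom b c, _, rfl⟩
  · rintro _ ⟨hb, ⟨c, m⟩, rfl⟩
    have hm : ⇑b ᵥ* m.1.map (algebraMap k F) = (↑c⁻¹ : F) • ⇑b := by
      rw [← Units.smul_def, eq_inv_smul_iff, Units.smul_def, ← vecMul_smul,
        ← coe_scalarMulMap (c, m)]
      exact hb
    refine ⟨c⁻¹, Units.ext ?_⟩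
    rw [coe_singerHom, coe_scalarMulMap, (vecMul_map_eq_smul_iff b).1 hm, inv_inv]

lemma ker_singerHom [Nonempty n] :
    (singerHom b).ker = (Units.map (algebraMap k F : k →* F)).range := by
  ext c
  have hker : singerHom b c = 1 ↔
      (Algebra.leftMulMatrix b (c : F)).map (algebraMap k F) = (c : F) • 1 := by
    rw [Units.ext_iff, coe_singerHom, Units.val_one, ← Units.smul_def, inv_smul_eq_iff,
      Units.smul_def]
  rw [MonoidHom.mem_ker, hker]
  refine ⟨fun h => ?_, ?_⟩
  · obtain ⟨i⟩ := ‹Nonempty n›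
    have hi : algebraMap k F (Algebra.leftMulMatrix b (c : F) i i) = c := by
      simpa using congrFun (congrFun h i) i
    have hne : Algebra.leftMulMatrix b (c : F) i i ≠ 0 := fun h0 => by
      rw [h0, map_zero] at hi
      exact c.ne_zero hi.symm
    exact ⟨Units.mk0 _ hne, Units.ext hi⟩
  · rintro ⟨d, rfl⟩
    ext i j
    by_cases hij : i = j <;> simp [hij, algebraMap_matrix_apply]

lemma natCard_covectorStabilizer_inf_range_scalarMulMap [Nonempty n] :
    Nat.card (covectorStabilizer ⇑b ⊓ (scalarMulMap k F).range : Subgroup (GL n F)) *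
      Nat.card kˣ = Nat.card Fˣ := by
  have hinj : Function.Injective (Units.map (algebraMap k F : k →* F)) :=
    Units.map_injective (algebraMap k F).injective
  rw [← range_singerHom, ← Subgroup.index_ker, ker_singerHom,
    Nat.card_congr (MonoidHom.ofInjective hinj).toEquiv, mul_comm, Subgroup.card_mul_index]

end Singer

section Geometry

open MulAction
open scoped Pointwise

variable {k F : Type} [Field k] [Field F] [Algebra k F]

lemma onCov_mk {x : Fin 3 → F} (hx : x ≠ 0) (u : Fin 3 → F) :
    OnCov F (.mk F x hx) u ↔ u ⬝ᵥ x = 0 := by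
  obtain ⟨a, ha⟩ := Projectivization.exists_smul_eq_mk_rep F x hx
  rw [OnCov, ← ha]
  change u ⬝ᵥ (a • x) = 0 ↔ _
  rw [dotProduct_smul]
  exact smul_eq_zero_iff_eq a

lemma algebraMap_comp_ne_zero {ι : Type*} {v : ι → k} (hv : v ≠ 0) : algebraMap k F ∘ v ≠ 0 :=
  fun h => hv (funext fun i => (map_eq_zero _).1 (congrFun h i))

lemma mk_mem_subplane (g : GL (Fin 3) F) {x : Fin 3 → F} (hx : x ≠ 0) :
    .mk F x hx ∈ Subplane k F g ↔ ∃ v : Fin 3 → k, v ≠ 0 ∧ ∃ c : Fˣ,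
      x = c • (g.1 *ᵥ (algebraMap k F ∘ v)) := by
  obtain ⟨a, ha⟩ := Projectivization.exists_smul_eq_mk_rep F x hx
  rw [Subplane, Set.mem_ofPred_eq, ← ha]
  refine exists_congr fun v => and_congr_right fun _ => ⟨?_, ?_⟩
  · rintro ⟨c, hc, hx⟩
    exact ⟨a⁻¹ * Units.mk0 c hc, by rw [mul_smul, eq_inv_smul_iff]; exact hx⟩
  · rintro ⟨c, rfl⟩
    exact ⟨a * c, mul_ne_zero a.ne_zero c.ne_zero, smul_smul a c _⟩

lemma mk_mem_subplane_one {x : Fin 3 → F} (hx : x ≠ 0) :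
    .mk F x hx ∈ Subplane k F 1 ↔ ∃ v : Fin 3 → k, v ≠ 0 ∧ ∃ c : Fˣ,
      x = c • (algebraMap k F ∘ v) := by
  simp only [mk_mem_subplane, Units.val_one, one_mulVec]

lemma subplane_mul (h g : GL (Fin 3) F) : Subplane k F (h * g) = h • Subplane k F g := by
  ext p
  rw [Set.mem_smul_set_iff_inv_smul_mem]
  induction p using Projectivization.ind with
  | h x hx =>
    rw [Projectivization.smul_mk, mk_mem_subplane, mk_mem_subplane]
    simp only [inv_smul_eq_iff, ← smul_comm (M := Fˣ) _ h]
    simp only [Units.smul_def h, smul_eq_mulVec, mulVec_mulVec, ← Units.val_mul]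

lemma exteriorTo_iff_linearIndependent (g : GL (Fin 3) F) (u : Fin 3 → F) :
    ExteriorTo k F g u ↔ LinearIndependent k (u ᵥ* g.1) := by
  rw [linearIndependent_iff_dotProduct_ne_zero]
  refine ⟨fun h w hw h0 => ?_, fun h p => ?_⟩
  · have hgw : g.1 *ᵥ (algebraMap k F ∘ w) ≠ 0 :=
      (smul_ne_zero_iff_ne g).2 (algebraMap_comp_ne_zero hw)
    refine h (.mk F _ hgw) ((mk_mem_subplane g hgw).2 ⟨w, hw, 1, (one_smul _ _).symm⟩) ?_
    rwa [onCov_mk, dotProduct_mulVec, dotProduct_comm]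
  · induction p using Projectivization.ind with
    | h x hx =>
      rw [mk_mem_subplane, onCov_mk]
      rintro ⟨v, hv, c, rfl⟩ h0
      rw [dotProduct_smul, dotProduct_mulVec, smul_eq_zero_iff_eq, dotProduct_comm] at h0
      exact h v hv h0

lemma mk_mem_splashOf (g : GL (Fin 3) F) (u : Fin 3 → F) {x : Fin 3 → F} (hx : x ≠ 0) :
    .mk F x hx ∈ SplashOf k F g u ↔
      u ⬝ᵥ x = 0 ∧ ¬ LinearIndependent k (g⁻¹.1 *ᵥ x) := by
  rw [linearIndependent_iff_dotProduct_ne_zero, SplashOf, Set.mem_ofPred_eq]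
  simp only [onCov_mk, dotProduct_mulVec, not_forall, not_not, exists_prop]
  rfl

lemma splashOf_mul (h g : GL (Fin 3) F) (u : Fin 3 → F) :
    SplashOf k F (h * g) u = h • SplashOf k F g (u ᵥ* h.1) := by
  ext p
  rw [Set.mem_smul_set_iff_inv_smul_mem]
  induction p using Projectivization.ind with
  | h x hx =>
    rw [Projectivization.smul_mk, mk_mem_splashOf, mk_mem_splashOf, Units.smul_def, smul_eq_mulVec,
      mulVec_mulVec, ← Units.val_mul, _root_.mul_inv_rev, dotProduct_mulVec, vecMul_vecMul,
      ← Units.val_mul, mul_inv_cancel, Units.val_one, vecMul_one]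

lemma splashOf_mul_scalarMulMap (g : GL (Fin 3) F) (p : Fˣ × GL (Fin 3) k) (u : Fin 3 → F) :
    SplashOf k F (g * scalarMulMap k F p) u = SplashOf k F g u := by
  ext x
  induction x using Projectivization.ind with
  | h x hx =>
    rw [mk_mem_splashOf, mk_mem_splashOf, _root_.mul_inv_rev, ← map_inv, Units.val_mul,
      ← mulVec_mulVec, linearIndependent_scalarMulMap_mulVec]

lemma stabilizer_subplane_one :
    stabilizer (GL (Fin 3) F) (Subplane k F 1) = (scalarMulMap k F).range := by
  have hmem {v : Fin 3 → k} (hv : v ≠ 0) :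
      .mk F _ (algebraMap_comp_ne_zero (F := F) hv) ∈ Subplane k F 1 :=
    (mk_mem_subplane_one _).2 ⟨v, hv, 1, (one_smul _ _).symm⟩
  refine le_antisymm (fun h hh => mem_range_scalarMulMap fun v hv => ?_) ?_
  · have hsmul := Set.smul_mem_smul_set (a := h) (hmem hv)
    rw [mem_stabilizer_iff.1 hh, Projectivization.smul_mk, mk_mem_subplane_one] at hsmul
    obtain ⟨w, -, c, hc⟩ := hsmul
    exact ⟨c, w, hc⟩
  · have hsubset (p : Fˣ × GL (Fin 3) k) :
        scalarMulMap k F p • Subplane k F 1 ⊆ Subplane k F 1 := by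
      rintro _ ⟨x, hx, rfl⟩
      induction x using Projectivization.ind with
      | h x hx0 =>
        obtain ⟨v, hv, c, rfl⟩ := (mk_mem_subplane_one hx0).1 hx
        refine (mk_mem_subplane_one _).2
          ⟨p.2.1 *ᵥ v, (smul_ne_zero_iff_ne p.2).2 hv, c * p.1, ?_⟩
        rw [mul_smul, Units.smul_def p.1, ← scalarMulMap_mulVec]
        exact smul_comm _ c _
    rintro _ ⟨p, rfl⟩
    refine (hsubset p).antisymm (Set.subset_smul_set_iff.2 ?_)
    rw [← map_inv]
    exact hsubset p⁻¹

lemma subplane_mul_scalarMulMap (g : GL (Fin 3) F) (p : Fˣ × GL (Fin 3) k) :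
    Subplane k F (g * scalarMulMap k F p) = Subplane k F g := by
  have hp : scalarMulMap k F p ∈ stabilizer (GL (Fin 3) F) (Subplane k F 1) := by
    rw [stabilizer_subplane_one]
    exact ⟨p, rfl⟩
  rw [subplane_mul, ← mul_one (scalarMulMap k F p), subplane_mul, hp, ← subplane_mul, mul_one]

lemma exists_mem_covectorStabilizer_mul_eq (hr : Module.finrank k F = 3) {u : Fin 3 → F}
    {g₁ g₂ : GL (Fin 3) F} (h₁ : ExteriorTo k F g₁ u) (h₂ : ExteriorTo k F g₂ u) :
    ∃ h ∈ covectorStabilizer u, ∃ p : Fˣ × GL (Fin 3) k, h * g₁ = g₂ * scalarMulMap k F p := by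
  rw [exteriorTo_iff_linearIndependent] at h₁ h₂
  let b₁ := basisOfLinearIndependentOfCardEqFinrank h₁ (by simp [hr])
  let b₂ := basisOfLinearIndependentOfCardEqFinrank h₂ (by simp [hr])
  have hb₁ : ⇑b₁ = u ᵥ* g₁.1 := coe_basisOfLinearIndependentOfCardEqFinrank _ _
  have hb₂ : ⇑b₂ = u ᵥ* g₂.1 := coe_basisOfLinearIndependentOfCardEqFinrank _ _
  let m : GL (Fin 3) k := ⟨b₂.toMatrix b₁, b₁.toMatrix b₂, b₂.toMatrix_mul_toMatrix_flip b₁,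
    b₁.toMatrix_mul_toMatrix_flip b₂⟩
  have hm : (u ᵥ* g₂.1) ᵥ* (scalarMulMap k F (1, m)).1 = u ᵥ* g₁.1 := by
    rw [← hb₁, ← hb₂, coe_scalarMulMap]
    ext j
    rw [← b₂.sum_toMatrix_smul_self b₁ j]
    simp [vecMul, dotProduct, m, Algebra.smul_def, mul_comm]
  refine ⟨g₂ * scalarMulMap k F (1, m) * g₁⁻¹, ?_, (1, m), inv_mul_cancel_right _ _⟩
  rw [mem_covectorStabilizer, Units.val_mul, Units.val_mul, ← vecMul_vecMul, ← vecMul_vecMul, hm,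
    vecMul_vecMul, ← Units.val_mul, mul_inv_cancel, Units.val_one, vecMul_one]

end Geometry

section NormalForm

open MulAction
open scoped Pointwise

variable {k F : Type} [Field k] [Field F] [Algebra k F]

variable (k F) in
/-- The normal form of an exterior splash: in suitable coordinates it is the set of points
`(0 : x : y)` with `N x + N y = 0`, where `N` is the norm of `F` over `k`. -/
def normSplash : Set (Projectivization F (Fin 3 → F)) :=
  {p | p.rep 0 = 0 ∧ Algebra.norm k (p.rep 1) + Algebra.norm k (p.rep 2) = 0}

lemma mk_mem_normSplash [FiniteDimensional k F] {x : Fin 3 → F} (hx : x ≠ 0) :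
    .mk F x hx ∈ normSplash k F ↔
      x 0 = 0 ∧ Algebra.norm k (x 1) + Algebra.norm k (x 2) = 0 := by
  obtain ⟨a, ha⟩ := Projectivization.exists_smul_eq_mk_rep F x hx
  have hN : Algebra.norm k (a : F) ≠ 0 := Algebra.norm_ne_zero_iff.2 a.ne_zero
  rw [normSplash, Set.mem_ofPred_eq, ← ha]
  simp only [Pi.smul_apply, Units.smul_def, smul_eq_mul, map_mul, ← mul_add, mul_eq_zero,
    a.ne_zero, hN, false_or]

variable (k F) in
/-- The matrices of the homographies that fix the covector `(1, 0, 0)` and preserve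
`normSplash k F`: on the line at the covector they are diagonal or antidiagonal, according to the
Boolean, and the two nonzero entries have equal norm. -/
def normSplashMatrix :
    Bool × F × F × Fˣ × {z : F | Algebra.norm k z = 1} → Matrix (Fin 3) (Fin 3) F
  | (false, c, d, a, z) => !![1, 0, 0; c, a, 0; d, 0, a * z]
  | (true, c, d, a, z) => !![1, 0, 0; c, 0, a; d, a * z, 0]

lemma normSplashMatrix_injective : Function.Injective (normSplashMatrix k F) := by
  rintro ⟨s, c, d, a, z⟩ ⟨s', c', d', a', z'⟩ h
  have hentry (i j : Fin 3) := congrFun (congrFun h i) j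
  obtain rfl : c = c' := by cases s <;> cases s' <;> exact hentry 1 0
  obtain rfl : d = d' := by cases s <;> cases s' <;> exact hentry 2 0
  cases s <;> cases s'
  · obtain rfl : a = a' := Units.ext (hentry 1 1)
    obtain rfl : z = z' := Subtype.ext (mul_left_cancel₀ a.ne_zero (hentry 2 2))
    rfl
  · exact absurd (hentry 1 1) a.ne_zero
  · exact absurd (hentry 1 2) a.ne_zero
  · obtain rfl : a = a' := Units.ext (hentry 1 2)
    obtain rfl : z = z' := Subtype.ext (mul_left_cancel₀ a.ne_zero (hentry 2 1))
    rfl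

lemma det_normSplashMatrix_ne_zero [FiniteDimensional k F] (t) :
    (normSplashMatrix k F t).det ≠ 0 := by
  obtain ⟨s, c, d, a, z, hz⟩ := t
  have hz0 : z ≠ 0 := Algebra.norm_ne_zero_iff.1 (hz.trans_ne one_ne_zero)
  cases s <;> simp [normSplashMatrix, det_fin_three, hz0]

lemma norm_add_norm_normSplashMatrix [FiniteDimensional k F] (t) {x y : F}
    (hxy : Algebra.norm k x + Algebra.norm k y = 0) :
    Algebra.norm k (normSplashMatrix k F t 1 1 * x + normSplashMatrix k F t 1 2 * y) +
      Algebra.norm k (normSplashMatrix k F t 2 1 * x + normSplashMatrix k F t 2 2 * y) = 0 := by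
  obtain ⟨s, c, d, a, z, hz⟩ := t
  have hz : Algebra.norm k z = 1 := hz
  cases s <;> simp [normSplashMatrix, hz, ← mul_add, hxy, add_comm (Algebra.norm k y)]

variable [Finite F]

lemma mem_covectorStabilizer_inf_stabilizer_normSplash {h : GL (Fin 3) F} :
    h ∈ covectorStabilizer (Pi.single 0 1) ⊓ stabilizer (GL (Fin 3) F) (normSplash k F) ↔
      h.1 0 = Pi.single 0 1 ∧ ∀ x y : F, Algebra.norm k x + Algebra.norm k y = 0 →
        Algebra.norm k (h 1 1 * x + h 1 2 * y) + Algebra.norm k (h 2 1 * x + h 2 2 * y) = 0 := by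
  have hmul {x : Fin 3 → F} (hx : x 0 = 0) (i : Fin 3) :
      (h • x) i = h i 1 * x 1 + h i 2 * x 2 := by
    simp [Units.smul_def, mulVec, dotProduct, Fin.sum_univ_three, hx]
  rw [Subgroup.mem_inf, mem_covectorStabilizer, single_one_vecMul,
    mem_stabilizer_set' (Set.toFinite _)]
  refine and_congr_right fun hrow => ⟨fun hh x y hxy => ?_, fun hh p hp => ?_⟩
  · by_cases hx : ![0, x, y] = 0
    · have hx0 : x = 0 := congrFun hx 1
      have hy0 : y = 0 := congrFun hx 2
      simp [hx0, hy0, Algebra.norm_zero]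
    · have hmem := hh ((mk_mem_normSplash hx).2 ⟨rfl, hxy⟩)
      rw [Projectivization.smul_mk, mk_mem_normSplash, hmul rfl, hmul rfl, hmul rfl] at hmem
      exact hmem.2
  · induction p using Projectivization.ind with
    | h x hx =>
      obtain ⟨hx0, hxy⟩ := (mk_mem_normSplash hx).1 hp
      have h01 : h 0 1 = 0 := congrFun hrow 1
      have h02 : h 0 2 = 0 := congrFun hrow 2
      rw [Projectivization.smul_mk, mk_mem_normSplash, hmul hx0, hmul hx0, hmul hx0, h01, h02]
      exact ⟨by ring, hh _ _ hxy⟩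

lemma exists_normSplashMatrix_eq (hr : Module.finrank k F = 3) {h : GL (Fin 3) F}
    (hh : h ∈ covectorStabilizer (Pi.single 0 1) ⊓
      stabilizer (GL (Fin 3) F) (normSplash k F)) :
    ∃ t, normSplashMatrix k F t = h.1 := by
  obtain ⟨hrow, hnorm⟩ := mem_covectorStabilizer_inf_stabilizer_normSplash.1 hh
  have hrow (j : Fin 3) : h 0 j = if j = 0 then 1 else 0 := by
    simpa [Pi.single_apply] using congrFun hrow j
  have hdet : h 1 1 * h 2 2 ≠ h 1 2 * h 2 1 := by
    have h0 := h.det_ne_zero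
    simpa [det_fin_three, hrow, sub_ne_zero] using h0
  have hdiv {a d : F} (ha : a ≠ 0) (had : Algebra.norm k a = Algebra.norm k d) :
      Algebra.norm k (d / a) = 1 := by
    apply mul_left_cancel₀ (Algebra.norm_ne_zero_iff.2 ha)
    rw [← map_mul, mul_div_cancel₀ _ ha, mul_one, had]
  rcases monomial_of_norm_add_norm_eq_zero hr hdet hnorm with ⟨h12, h21, hN⟩ | ⟨h11, h22, hN⟩
  · have ha : h 1 1 ≠ 0 := left_ne_zero_of_mul (by rwa [h12, zero_mul] at hdet)
    refine ⟨(false, h 1 0, h 2 0, Units.mk0 _ ha, ⟨h 2 2 / h 1 1, hdiv ha hN⟩), ?_⟩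
    ext i j
    fin_cases i <;> fin_cases j <;> simp [normSplashMatrix, hrow, h12, h21, mul_div_cancel₀ _ ha]
  · have ha : h 1 2 ≠ 0 := left_ne_zero_of_mul (by rw [h11, zero_mul] at hdet; exact hdet.symm)
    refine ⟨(true, h 1 0, h 2 0, Units.mk0 _ ha, ⟨h 2 1 / h 1 2, hdiv ha hN⟩), ?_⟩
    ext i j
    fin_cases i <;> fin_cases j <;> simp [normSplashMatrix, hrow, h11, h22, mul_div_cancel₀ _ ha]

lemma image_val_covectorStabilizer_inf_stabilizer_normSplash (hr : Module.finrank k F = 3) :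
    Units.val '' (covectorStabilizer (Pi.single 0 1) ⊓
      stabilizer (GL (Fin 3) F) (normSplash k F) : Subgroup (GL (Fin 3) F)) =
      Set.range (normSplashMatrix k F) := by
  refine Set.Subset.antisymm ?_ ?_
  · rintro _ ⟨h, hh, rfl⟩
    exact exists_normSplashMatrix_eq hr hh
  · rintro _ ⟨t, rfl⟩
    refine ⟨GeneralLinearGroup.mkOfDetNeZero _ (det_normSplashMatrix_ne_zero t),
      mem_covectorStabilizer_inf_stabilizer_normSplash.2
        ⟨?_, fun _ _ => norm_add_norm_normSplashMatrix t⟩, rfl⟩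
    obtain ⟨s, c, d, a, z⟩ := t
    ext j
    cases s <;> fin_cases j <;> rfl

lemma splashOf_moore_eq_normSplash [Fintype k] (hr : Module.finrank k F = 3) {a : Fin 3 → F}
    (hdet : (mooreMatrix k a).det ≠ 0) :
    SplashOf k F (GeneralLinearGroup.mkOfDetNeZero (mooreMatrix k a) hdet) (Pi.single 0 1) =
      normSplash k F := by
  set A := GeneralLinearGroup.mkOfDetNeZero (mooreMatrix k a) hdet
  ext p
  induction p using Projectivization.ind with
  | h x hx =>
    rw [mk_mem_splashOf, mk_mem_normSplash, single_one_dotProduct]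
    refine and_congr_right fun hx0 => ?_
    have hmoore : mooreMatrix k a *ᵥ (A⁻¹.1 *ᵥ x) = x := by
      rw [mulVec_mulVec, show mooreMatrix k a = A.1 from rfl, ← Units.val_mul, mul_inv_cancel,
        Units.val_one, one_mulVec]
    have hay : a ⬝ᵥ (A⁻¹.1 *ᵥ x) = 0 := (congrFun hmoore 0).trans hx0
    have hmul := det_mooreMatrix_mul_det_mooreMatrix hr a _ hay
    rw [hmoore] at hmul
    rw [← det_mooreMatrix_ne_zero_iff hr, not_not,
      ← map_eq_zero_iff _ (FaithfulSMul.algebraMap_injective k F), ← hmul, mul_eq_zero,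
      or_iff_right hdet]

lemma natCard_covectorStabilizer_inf_stabilizer_splashOf (hr : Module.finrank k F = 3)
    {g : GL (Fin 3) F} {u : Fin 3 → F} (hg : ExteriorTo k F g u) :
    Nat.card (covectorStabilizer u ⊓ stabilizer (GL (Fin 3) F) (SplashOf k F g u) :
        Subgroup (GL (Fin 3) F)) =
      Nat.card (covectorStabilizer (Pi.single 0 1) ⊓
        stabilizer (GL (Fin 3) F) (normSplash k F) : Subgroup (GL (Fin 3) F)) := by
  have : Finite k := .of_injective _ (algebraMap k F).injective
  have := Fintype.ofFinite k
  have hdet := (det_mooreMatrix_ne_zero_iff hr _).2 ((exteriorTo_iff_linearIndependent g u).1 hg)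
  have hrow : Pi.single 0 1 ᵥ* (GeneralLinearGroup.mkOfDetNeZero _ hdet).1 = u ᵥ* g.1 :=
    single_one_vecMul _ _
  rw [← mul_one g, splashOf_mul, natCard_covectorStabilizer_inf_stabilizer, ← hrow,
    ← natCard_covectorStabilizer_inf_stabilizer, ← splashOf_mul, mul_one,
    splashOf_moore_eq_normSplash hr]

lemma natCard_covectorStabilizer_inf_stabilizer_normSplash [Fintype k]
    (hr : Module.finrank k F = 3) :
    Nat.card (covectorStabilizer (Pi.single 0 1) ⊓
        stabilizer (GL (Fin 3) F) (normSplash k F) : Subgroup (GL (Fin 3) F)) =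
      2 * Nat.card F ^ 2 * (Nat.card F - 1) * (Fintype.card k ^ 2 + Fintype.card k + 1) := by
  rw [← SetLike.coe_sort_coe, Nat.card_coe_set_eq,
    ← Set.ncard_image_of_injective _ Units.val_injective,
    image_val_covectorStabilizer_inf_stabilizer_normSplash hr,
    ← Nat.card_coe_set_eq, Nat.card_range_of_injective normSplashMatrix_injective]
  simp only [Nat.card_prod, Nat.card_units, Nat.card_eq_fintype_card (α := Bool),
    Fintype.card_bool, Nat.card_coe_set_eq, ncard_setOf_norm_eq_one hr]
  ring

end NormalForm

section Counting

open MulAction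
open scoped Pointwise

lemma natCard_covectorStabilizer_fin_three {K : Type*} [Field K] [Finite K] {u : Fin 3 → K}
    (hu : u ≠ 0) :
    Nat.card (covectorStabilizer u) =
      Nat.card K ^ 3 * (Nat.card K - 1) ^ 2 * (Nat.card K + 1) := by
  have : Fintype K := Fintype.ofFinite K
  have hmul := natCard_covectorStabilizer_mul hu
  obtain ⟨m, hm⟩ : ∃ m, Nat.card K = m + 2 :=
    Nat.exists_eq_add_of_le' (Finite.one_lt_card : 1 < Nat.card K)
  have h₁ : (m + 2) ^ 3 - (m + 2) = (m + 2) * (m + 1) * (m + 3) :=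
    Nat.sub_eq_of_eq_add (by ring)
  have h₂ : (m + 2) ^ 3 - (m + 2) ^ 2 = (m + 2) ^ 2 * (m + 1) := Nat.sub_eq_of_eq_add (by ring)
  have h₃ : 1 < (m + 2) ^ 3 := Nat.one_lt_pow three_ne_zero (by lia)
  rw [Matrix.card_GL_field, ← Nat.card_eq_fintype_card (α := K), hm, Fintype.card_fin,
    Fin.prod_univ_three, Fin.val_zero, Fin.val_one, Fin.val_two, pow_zero, pow_one, h₁, h₂] at hmul
  rw [hm, Nat.add_sub_assoc one_le_two]
  refine Nat.eq_of_mul_eq_mul_right (Nat.sub_pos_of_lt h₃) (hmul.trans ?_)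
  ring

variable {k F : Type} [Field k] [Field F] [Algebra k F] {g g₁ g₂ h : GL (Fin 3) F}
  {u : Fin 3 → F}

lemma exteriorTo_mul (hh : h ∈ covectorStabilizer u) :
    ExteriorTo k F (h * g) u ↔ ExteriorTo k F g u := by
  rw [exteriorTo_iff_linearIndependent, exteriorTo_iff_linearIndependent, Units.val_mul,
    ← vecMul_vecMul, mem_covectorStabilizer.1 hh]

lemma splashOf_mul_of_mem_covectorStabilizer (hh : h ∈ covectorStabilizer u) :
    SplashOf k F (h * g) u = h • SplashOf k F g u := by
  rw [splashOf_mul, mem_covectorStabilizer.1 hh]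

lemma exists_mem_covectorStabilizer_smul_eq (hr : Module.finrank k F = 3)
    (h₁ : ExteriorTo k F g₁ u) (h₂ : ExteriorTo k F g₂ u) :
    ∃ h ∈ covectorStabilizer u, h • Subplane k F g₁ = Subplane k F g₂ ∧
      h • SplashOf k F g₁ u = SplashOf k F g₂ u := by
  obtain ⟨h, hh, p, hp⟩ := exists_mem_covectorStabilizer_mul_eq hr h₁ h₂
  refine ⟨h, hh, ?_, ?_⟩
  · rw [← subplane_mul, hp, subplane_mul_scalarMulMap]
  · rw [← splashOf_mul_of_mem_covectorStabilizer hh, hp, splashOf_mul_scalarMulMap]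

lemma mem_stabilizer_subplane :
    h ∈ stabilizer (GL (Fin 3) F) (Subplane k F g) ↔ ∃ p, h * g = g * scalarMulMap k F p := by
  have hconj : h ∈ stabilizer (GL (Fin 3) F) (Subplane k F g) ↔
      g⁻¹ * h * g ∈ stabilizer (GL (Fin 3) F) (Subplane k F 1) := by
    rw [mem_stabilizer_iff, mem_stabilizer_iff, mul_smul, mul_smul, inv_smul_eq_iff,
      ← subplane_mul g, mul_one]
  rw [hconj, stabilizer_subplane_one]
  refine exists_congr fun p => ?_
  rw [mul_assoc, eq_inv_mul_iff_mul_eq, eq_comm]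

lemma covectorStabilizer_inf_stabilizer_subplane_le :
    covectorStabilizer u ⊓ stabilizer (GL (Fin 3) F) (Subplane k F g) ≤
      stabilizer (GL (Fin 3) F) (SplashOf k F g u) := by
  rintro h ⟨hu, hg⟩
  obtain ⟨p, hp⟩ := mem_stabilizer_subplane.1 hg
  rw [mem_stabilizer_iff, ← splashOf_mul_of_mem_covectorStabilizer hu, hp,
    splashOf_mul_scalarMulMap]

lemma setOf_subplane_eq_orbit (hr : Module.finrank k F = 3) (hg : ExteriorTo k F g u) :
    {S | ∃ g', S = Subplane k F g' ∧ ExteriorTo k F g' u} =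
      orbit (covectorStabilizer u) (Subplane k F g) := by
  ext S
  constructor
  · rintro ⟨g', rfl, hg'⟩
    obtain ⟨h, hh, hS, -⟩ := exists_mem_covectorStabilizer_smul_eq hr hg hg'
    exact ⟨⟨h, hh⟩, hS⟩
  · rintro ⟨⟨h, hh⟩, rfl⟩
    exact ⟨h * g, (subplane_mul h g).symm, (exteriorTo_mul hh).2 hg⟩

lemma setOf_splashOf_eq_orbit (hr : Module.finrank k F = 3) (hg : ExteriorTo k F g u) :
    {X | ∃ g', ExteriorTo k F g' u ∧ X = SplashOf k F g' u} =
      orbit (covectorStabilizer u) (SplashOf k F g u) := by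
  ext X
  constructor
  · rintro ⟨g', hg', rfl⟩
    obtain ⟨h, hh, -, hX⟩ := exists_mem_covectorStabilizer_smul_eq hr hg hg'
    exact ⟨⟨h, hh⟩, hX⟩
  · rintro ⟨⟨h, hh⟩, rfl⟩
    exact ⟨h * g, (exteriorTo_mul hh).2 hg, (splashOf_mul_of_mem_covectorStabilizer hh).symm⟩

lemma setOf_subplane_splashOf_eq_orbit (hr : Module.finrank k F = 3)
    (hg : ExteriorTo k F g u) :
    {S | ∃ g', S = Subplane k F g' ∧ ExteriorTo k F g' u ∧
        SplashOf k F g' u = SplashOf k F g u} =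
      orbit (covectorStabilizer u ⊓ stabilizer (GL (Fin 3) F) (SplashOf k F g u) :
        Subgroup (GL (Fin 3) F)) (Subplane k F g) := by
  ext S
  constructor
  · rintro ⟨g', rfl, hg', hsplash⟩
    obtain ⟨h, hh, hS, hX⟩ := exists_mem_covectorStabilizer_smul_eq hr hg hg'
    exact ⟨⟨h, hh, hX.trans hsplash⟩, hS⟩
  · rintro ⟨⟨h, hh, hX⟩, rfl⟩
    exact ⟨h * g, (subplane_mul h g).symm, (exteriorTo_mul hh).2 hg,
      (splashOf_mul_of_mem_covectorStabilizer hh).trans hX⟩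

lemma exists_exteriorTo (hr : Module.finrank k F = 3) (hu : u ≠ 0) :
    ∃ g, ExteriorTo k F g u := by
  have : FiniteDimensional k F := .of_finrank_pos (by lia)
  let b := Module.finBasisOfFinrankEq k F hr
  have hb : ⇑b ≠ 0 := fun h => b.ne_zero 0 (congrFun h 0)
  obtain ⟨g, hg⟩ := exists_vecMul_eq hu hb
  exact ⟨g, (exteriorTo_iff_linearIndependent g u).2 (hg ▸ b.linearIndependent)⟩

variable [Fintype k] [Finite F]

lemma natCard_covectorStabilizer_inf_stabilizer_subplane (hr : Module.finrank k F = 3)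
    (hg : ExteriorTo k F g u) :
    Nat.card (covectorStabilizer u ⊓ stabilizer (GL (Fin 3) F) (Subplane k F g) :
      Subgroup (GL (Fin 3) F)) = Fintype.card k ^ 2 + Fintype.card k + 1 := by
  let b := basisOfLinearIndependentOfCardEqFinrank
    ((exteriorTo_iff_linearIndependent g u).1 hg) (by simp [hr])
  have hb : ⇑b = u ᵥ* g.1 := coe_basisOfLinearIndependentOfCardEqFinrank _ _
  have hcard := natCard_covectorStabilizer_inf_range_scalarMulMap b
  rw [hb, ← stabilizer_subplane_one, ← natCard_covectorStabilizer_inf_stabilizer,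
    ← subplane_mul, mul_one, Nat.card_units, Nat.card_units,
    Module.natCard_eq_pow_finrank (K := k) (V := F), hr, Nat.card_eq_fintype_card (α := k),
    ← geom_sum_three_mul] at hcard
  exact Nat.eq_of_mul_eq_mul_right (Nat.sub_pos_of_lt Fintype.one_lt_card) hcard

lemma ncard_setOf_subplane_splashOf (hr : Module.finrank k F = 3) (hg : ExteriorTo k F g u) :
    {S | ∃ g', S = Subplane k F g' ∧ ExteriorTo k F g' u ∧
        SplashOf k F g' u = SplashOf k F g u}.ncard =
      2 * Fintype.card k ^ 6 * (Fintype.card k ^ 3 - 1) := by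
  have horbit := ncard_orbit_mul_natCard_inf_stabilizer
    (covectorStabilizer u ⊓ stabilizer (GL (Fin 3) F) (SplashOf k F g u)) (Subplane k F g)
  rw [← setOf_subplane_splashOf_eq_orbit hr hg, inf_right_comm,
    inf_of_le_left covectorStabilizer_inf_stabilizer_subplane_le,
    natCard_covectorStabilizer_inf_stabilizer_subplane hr hg,
    natCard_covectorStabilizer_inf_stabilizer_splashOf hr hg,
    natCard_covectorStabilizer_inf_stabilizer_normSplash hr] at horbit
  rw [Nat.eq_of_mul_eq_mul_right (Nat.succ_pos _) horbit,
    Module.natCard_eq_pow_finrank (K := k) (V := F), hr, Nat.card_eq_fintype_card]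
  ring

lemma ncard_setOf_subplane (hr : Module.finrank k F = 3) (hu : u ≠ 0) :
    {S | ∃ g', S = Subplane k F g' ∧ ExteriorTo k F g' u}.ncard =
      Fintype.card k ^ 9 * (Fintype.card k ^ 3 - 1) * (Fintype.card k ^ 3 + 1) *
        (Fintype.card k - 1) := by
  obtain ⟨g, hg⟩ := exists_exteriorTo hr hu
  have horbit := ncard_orbit_mul_natCard_inf_stabilizer (covectorStabilizer u) (Subplane k F g)
  rw [← setOf_subplane_eq_orbit hr hg, natCard_covectorStabilizer_inf_stabilizer_subplane hr hg,
    natCard_covectorStabilizer_fin_three hu, Module.natCard_eq_pow_finrank (K := k) (V := F), hr,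
    Nat.card_eq_fintype_card, ← geom_sum_three_mul] at horbit
  rw [← geom_sum_three_mul]
  have hpos : 0 < Fintype.card k ^ 2 + Fintype.card k + 1 := Nat.succ_pos _
  refine Nat.eq_of_mul_eq_mul_right hpos (horbit.trans ?_)
  ring

lemma two_mul_ncard_setOf_splashOf (hr : Module.finrank k F = 3) (hu : u ≠ 0) :
    2 * {X | ∃ g', ExteriorTo k F g' u ∧ X = SplashOf k F g' u}.ncard =
      Fintype.card k ^ 3 * (Fintype.card k ^ 3 + 1) * (Fintype.card k - 1) := by
  obtain ⟨g, hg⟩ := exists_exteriorTo hr hu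
  have horbit :=
    ncard_orbit_mul_natCard_inf_stabilizer (covectorStabilizer u) (SplashOf k F g u)
  rw [← setOf_splashOf_eq_orbit hr hg, natCard_covectorStabilizer_inf_stabilizer_splashOf hr hg,
    natCard_covectorStabilizer_inf_stabilizer_normSplash hr,
    natCard_covectorStabilizer_fin_three hu, Module.natCard_eq_pow_finrank (K := k) (V := F), hr,
    Nat.card_eq_fintype_card] at horbit
  have hq : 1 < Fintype.card k := Fintype.one_lt_card
  have hQ : 0 < Fintype.card k ^ 3 - 1 := Nat.sub_pos_of_lt (Nat.one_lt_pow three_ne_zero hq)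
  have hpos : 0 < (Fintype.card k ^ 3) ^ 2 * (Fintype.card k ^ 3 - 1) *
    (Fintype.card k ^ 2 + Fintype.card k + 1) := by positivity
  refine Nat.eq_of_mul_eq_mul_right hpos ?_
  linear_combination horbit + (Fintype.card k ^ 3) ^ 3 * (Fintype.card k ^ 3 - 1) *
    (Fintype.card k ^ 3 + 1) * (geom_sum_three_mul (Fintype.card k)).symm

end Counting

/-- for any line u of PG(2,q^3): every exterior splash S on u comes from
exactly 2q^6(q^3-1) order-q-subplanes; there are q^9(q^3-1)(q^3+1)(q-1) subplanes
exterior to u, and (1/2)q^3(q^3+1)(q-1) exterior splashes on u; the stabilizer of the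
line u is transitive on the subplanes exterior to u. -/
theorem stmt12 (p n q : ℕ) (hp : p.Prime) (hn : 0 < n) (hq : q = p ^ n)
    (k F : Type) [Field k] [Field F] [Algebra k F] [Fintype k] [Fintype F]
    (hk : Fintype.card k = q) (hF : Fintype.card F = q ^ 3)
    (u : Fin 3 → F) (hu : u ≠ 0) :
    (∀ g : GL (Fin 3) F, ExteriorTo k F g u →
      Set.ncard {S : Set (Projectivization F (Fin 3 → F)) | ∃ g' : GL (Fin 3) F,
          S = Subplane k F g' ∧ ExteriorTo k F g' u ∧
          SplashOf k F g' u = SplashOf k F g u}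
        = 2 * q ^ 6 * (q ^ 3 - 1)) ∧
    Set.ncard {S : Set (Projectivization F (Fin 3 → F)) | ∃ g' : GL (Fin 3) F,
        S = Subplane k F g' ∧ ExteriorTo k F g' u} =
      q ^ 9 * (q ^ 3 - 1) * (q ^ 3 + 1) * (q - 1) ∧
    2 * Set.ncard {X : Set (Projectivization F (Fin 3 → F)) | ∃ g' : GL (Fin 3) F,
        ExteriorTo k F g' u ∧ X = SplashOf k F g' u} =
      q ^ 3 * (q ^ 3 + 1) * (q - 1) ∧
    (∀ g₁ g₂ : GL (Fin 3) F, ExteriorTo k F g₁ u → ExteriorTo k F g₂ u →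
      ∃ h : GL (Fin 3) F,
        (∃ c : F, c ≠ 0 ∧
          Matrix.vecMul u ((h⁻¹ : GL (Fin 3) F) : Matrix (Fin 3) (Fin 3) F) = c • u) ∧
        Subplane k F (h * g₁) = Subplane k F g₂) := by
  subst hk
  have hr : Module.finrank k F = 3 :=
    Nat.pow_right_injective (Fintype.one_lt_card : 2 ≤ Fintype.card k)
      (Module.card_eq_pow_finrank.symm.trans hF)
  refine ⟨fun g hg => ncard_setOf_subplane_splashOf hr hg, ncard_setOf_subplane hr hu,
    two_mul_ncard_setOf_splashOf hr hu, fun g₁ g₂ h₁ h₂ => ?_⟩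
  obtain ⟨h, hh, hS, -⟩ := exists_mem_covectorStabilizer_smul_eq hr h₁ h₂
  refine ⟨h, ⟨1, one_ne_zero, ?_⟩, (subplane_mul h g₁).trans hS⟩
  rw [one_smul]
  exact mem_covectorStabilizer.1 (inv_mem hh)
end

section
/- Let P ∈ PG(1,q^3) and let K ≤ PGL(2,q^3) be the stabilizer of P, of order q^3(q^3-1). Then K acts regularly on the set of order-q-sublines of PG(1,q^3) not containing P, of which there are exactly q^3(q^3-1). -/
open Matrix

/-- The order-q-subline of PG(1,q^3): image of the canonical subline PG(1,q) under the
homography induced by g ∈ GL(2,q^3). -/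
def Subline (k F : Type) [Field k] [Field F] [Algebra k F]
    (g : GL (Fin 2) F) : Set (Projectivization F (Fin 2 → F)) :=
  {x | ∃ v : Fin 2 → k, v ≠ 0 ∧ ∃ c : F, c ≠ 0 ∧
    x.rep = c • (g : Matrix (Fin 2) (Fin 2) F).mulVec (fun i => algebraMap k F (v i))}

/-- The image of a point set of PG(1,q^3) under the homography induced by g. -/
def ImgSet (F : Type) [Field F] (g : GL (Fin 2) F)
    (S : Set (Projectivization F (Fin 2 → F))) : Set (Projectivization F (Fin 2 → F)) :=
  {y | ∃ x ∈ S, ∃ c : F, y.rep = c • (g : Matrix (Fin 2) (Fin 2) F).mulVec x.rep}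

/-!
Suppose `[F : k] = n + 1` and let `x ∈ Fⁿ` have `k`-linearly independent coordinates, so that they
span a `k`-hyperplane of `F`. Multiplication by `Fˣ` permutes these hyperplanes transitively, and
the stabilizer of a hyperplane is `kˣ`; hence `PGLₙ(k)`, the stabilizer in `PGLₙ(F)` of the set of
`k`-rational points, acts regularly on such points `[x]`. For `n = 2` they are exactly the points
off the canonical subline `S`. Conjugation turns "the stabilizer of `S` acts regularly on the
points off `S`" into "the stabilizer of `P` acts regularly on the translates of `S` avoiding `P`",
so these translates are equinumerous with that stabilizer, which is the affine group `F ⋊ Fˣ`.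
-/

open scoped Pointwise MatrixGroups LinearAlgebra.Projectivization

section Hyperplane

variable {k F ι : Type*} [Field k] [Field F] [Algebra k F] [Fintype ι]

lemma mem_range_algebraMap_of_forall_mul_mem {W : Submodule k F}
    (hW : Module.finrank k (F ⧸ W) = 1) {l : F} (hl : ∀ w ∈ W, l * w ∈ W) :
    l ∈ Set.range (algebraMap k F) := by
  obtain ⟨a, ha, -⟩ :=
    (W.mapQ W (LinearMap.mulLeft k l) hl).existsUnique_eq_smul_id_of_finrank_eq_one hW
  have hmem (x : F) : (l - algebraMap k F a) * x ∈ W := by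
    rw [sub_mul, ← Algebra.smul_def, ← Submodule.Quotient.eq]
    exact LinearMap.congr_fun ha (W.mkQ x)
  by_contra hla
  have hne : l - algebraMap k F a ≠ 0 := fun h => hla ⟨a, (sub_eq_zero.1 h).symm⟩
  have hW_top : W = ⊤ := Submodule.eq_top_iff'.2 fun x => by
    simpa only [mul_div_cancel₀ x hne] using hmem (x / (l - algebraMap k F a))
  have : Subsingleton (F ⧸ W) := Submodule.Quotient.subsingleton_iff.2 hW_top
  exact zero_ne_one (Module.finrank_zero_of_subsingleton.symm.trans hW)

lemma exists_ne_zero_forall_mul_mem {W : Submodule k F}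
    (hW : Module.finrank k (F ⧸ W) = 1) (y : ι → F) (hι : Fintype.card ι < Module.finrank k F) :
    ∃ l : F, l ≠ 0 ∧ ∀ i, l * y i ∈ W := by
  have : FiniteDimensional k F := .of_finrank_pos (by lia)
  let φ : F →ₗ[k] ι → F ⧸ W := LinearMap.pi fun i => W.mkQ ∘ₗ LinearMap.mulRight k (y i)
  have hφ : LinearMap.ker φ ≠ ⊥ :=
    LinearMap.ker_ne_bot_of_finrank_lt (by simpa [Module.finrank_pi_fintype, hW] using hι)
  obtain ⟨l, hl, hl0⟩ := (Submodule.ne_bot_iff _).1 hφ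
  exact ⟨l, hl0, fun i => (Submodule.Quotient.mk_eq_zero W).1 (congrFun hl i)⟩

lemma finrank_quotient_span_range
    (hF : Module.finrank k F = Fintype.card ι + 1) {x : ι → F} (hx : LinearIndependent k x) :
    Module.finrank k (F ⧸ Submodule.span k (Set.range x)) = 1 := by
  have : FiniteDimensional k F := .of_finrank_pos (by lia)
  have := Submodule.finrank_quotient_add_finrank (Submodule.span k (Set.range x))
  rw [finrank_span_eq_card hx] at this
  lia

variable [DecidableEq ι]

lemma exists_map_mulVec_eq_smul (hF : Module.finrank k F = Fintype.card ι + 1) {x y : ι → F}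
    (hx : LinearIndependent k x) (hy : LinearIndependent k y) :
    ∃ A : GL ι k, ∃ l : F, A.1.map (algebraMap k F) *ᵥ x = l • y := by
  obtain ⟨l, hl, hly⟩ := exists_ne_zero_forall_mul_mem (finrank_quotient_span_range hF hx) y
    (by lia)
  simp only [Submodule.mem_span_range_iff_exists_fun] at hly
  choose A hA using hly
  have hAx : (of A).map (algebraMap k F) *ᵥ x = l • y := funext fun i => by
    simpa [mulVec, dotProduct, Algebra.smul_def] using hA i
  refine ⟨GeneralLinearGroup.mkOfDetNeZero (of A) fun hdet => ?_, l, hAx⟩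
  obtain ⟨u, hu, huA⟩ := exists_vecMul_eq_zero_iff.2 hdet
  refine hu (funext (Fintype.linearIndependent_iff.1 hy u (mul_left_cancel₀ hl ?_)))
  have huA' : (algebraMap k F ∘ u) ᵥ* (of A).map (algebraMap k F) = 0 := funext fun i => by
    rw [← RingHom.map_vecMul, huA, Pi.zero_apply, map_zero, Pi.zero_apply]
  calc l * ∑ i, u i • y i = (algebraMap k F ∘ u) ⬝ᵥ (l • y) := by
        simp [dotProduct, Finset.mul_sum, Algebra.smul_def, mul_left_comm]
    _ = l * 0 := by rw [← hAx, dotProduct_mulVec, huA', zero_dotProduct, mul_zero]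

lemma eq_smul_one_of_map_mulVec_eq_smul (hF : Module.finrank k F = Fintype.card ι + 1) {x : ι → F}
    (hx : LinearIndependent k x) {A : Matrix ι ι k} {l : F}
    (hA : A.map (algebraMap k F) *ᵥ x = l • x) : ∃ a : k, A = a • (1 : Matrix ι ι k) := by
  have hAx (i : ι) : ∑ j, A i j • x j = l * x i := by
    simpa [mulVec, dotProduct, Algebra.smul_def] using congrFun hA i
  obtain ⟨a, rfl⟩ : l ∈ Set.range (algebraMap k F) := by
    refine mem_range_algebraMap_of_forall_mul_mem (finrank_quotient_span_range hF hx) ?_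
    refine (Submodule.span_le (p := (Submodule.span k (Set.range x)).comap
      (LinearMap.mulLeft k l))).2 ?_
    rintro _ ⟨i, rfl⟩
    exact (Submodule.mem_span_range_iff_exists_fun k).2 ⟨A i, hAx i⟩
  refine ⟨a, ext fun i => congrFun (hx.fintypeLinearCombination_injective ?_)⟩
  simp [Fintype.linearCombination_apply, hAx, one_apply, ite_smul, ← Algebra.smul_def]

end Hyperplane

section PGL

variable {F ι : Type*} [Field F] [Fintype ι] [DecidableEq ι]

lemma smul_eq_iff_exists_mulVec_rep_eq_smul {g : GL ι F} {x y : ℙ F (ι → F)} :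
    g • x = y ↔ ∃ c : F, g.1 *ᵥ x.rep = c • y.rep := by
  conv_lhs => rw [← x.mk_rep, ← y.mk_rep, Projectivization.smul_mk, Projectivization.mk_eq_mk_iff']
  exact exists_congr fun c => eq_comm

lemma smul_eq_iff_exists_rep_eq_smul_mulVec {g : GL ι F} {x y : ℙ F (ι → F)} :
    g • x = y ↔ ∃ c : F, y.rep = c • (g.1 *ᵥ x.rep) := by
  conv_lhs => rw [← x.mk_rep, ← y.mk_rep, Projectivization.smul_mk, eq_comm,
    Projectivization.mk_eq_mk_iff']
  exact exists_congr fun c => eq_comm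

lemma mk_eq_mk_iff_exists_eq_smul [Nonempty ι] {g h : GL ι F} :
    ProjGenLinGroup.mk g = ProjGenLinGroup.mk h ↔ ∃ a : F, g.1 = a • h.1 := by
  rw [eq_comm, ProjGenLinGroup.mk_eq_mk_iff]
  constructor
  · rintro ⟨u, rfl⟩
    exact ⟨u, by simp [← smul_one_eq_diagonal]⟩
  · rintro ⟨a, ha⟩
    have ha0 : a ≠ 0 := by
      rintro rfl
      exact g.det_ne_zero (by simp [ha])
    exact ⟨.mk0 a ha0, Units.ext (by simp [ha, ← smul_one_eq_diagonal])⟩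

lemma map_mk_stabilizer (P : ℙ F (ι → F)) :
    (MulAction.stabilizer (GL ι F) P).map (QuotientGroup.mk' (Subgroup.center (GL ι F))) =
      MulAction.stabilizer PGL(ι, F) P := by
  refine SetLike.ext fun h => ⟨?_, fun hh => ?_⟩
  · rintro ⟨g, hg, rfl⟩
    exact hg
  · obtain ⟨g, rfl⟩ := ProjGenLinGroup.mk_surjective h
    exact ⟨g, hh, rfl⟩

instance : MulAction.IsPretransitive PGL(ι, F) (ℙ F (ι → F)) where
  exists_smul_eq x y := by
    obtain ⟨g, hg⟩ := MulAction.exists_smul_eq (SpecialLinearGroup ι F) x y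
    exact ⟨.mk g, hg⟩

end PGL

lemma map_mulVec_comp {m n R S : Type*} [Fintype n] [CommSemiring R] [CommSemiring S]
    (f : R →+* S) (A : Matrix m n R) (v : n → R) : A.map f *ᵥ (f ∘ v) = f ∘ (A *ᵥ v) :=
  funext fun i => (f.map_mulVec A v i).symm

section RationalPoints

variable {k F ι : Type*} [Field k] [Field F] [Algebra k F]

variable (k F ι) in
/-- The points of the projective space `ℙ(Fⁿ)` that have homogeneous coordinates in the subfield
`k`, i.e. the canonical subgeometry `PG(n - 1, k)`, whose translates on the projective line are the
sublines. The coordinates `v` and the factor `c` are automatically nonzero, since `x.rep` is. -/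
def rationalPoints : Set (ℙ F (ι → F)) :=
  {x | ∃ (v : ι → k) (c : F), x.rep = c • (algebraMap k F ∘ v)}

lemma mk_mem_rationalPoints_iff {v : ι → F} (hv : v ≠ 0) :
    .mk F v hv ∈ rationalPoints k F ι ↔ ∃ (u : ι → k) (c : F), v = c • (algebraMap k F ∘ u) := by
  obtain ⟨a, ha⟩ := Projectivization.exists_smul_eq_mk_rep F v hv
  refine exists_congr fun u => ⟨fun ⟨c, hc⟩ => ⟨a⁻¹ • c, ?_⟩, fun ⟨c, hc⟩ => ⟨a • c, ?_⟩⟩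
  · rw [smul_assoc, ← hc, ← ha, inv_smul_smul]
  · rw [smul_assoc, ← hc, ha]

lemma mk_notMem_rationalPoints_iff {v : Fin 2 → F} (hv : v ≠ 0) :
    .mk F v hv ∉ rationalPoints k F (Fin 2) ↔ LinearIndependent k v := by
  rw [mk_mem_rationalPoints_iff, linearIndependent_fin2]
  refine ⟨fun hR => ⟨fun h => hR ⟨![1, 0], v 0, ?_⟩, fun a ha => hR ⟨![a, 1], v 1, ?_⟩⟩, ?_⟩
  · ext i
    fin_cases i <;> simp [h]
  · ext i
    fin_cases i <;> simp [← ha, Algebra.smul_def, mul_comm]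
  · rintro ⟨hv₁, hind⟩ ⟨u, c, rfl⟩
    have hu₁ : algebraMap k F (u 1) ≠ 0 := fun h => hv₁ (by simp [h])
    refine hind (u 0 / u 1) ?_
    simp only [Algebra.smul_def, map_div₀, Pi.smul_apply, Function.comp_apply]
    field_simp

variable [Fintype ι] [DecidableEq ι]

lemma smul_mem_rationalPoints_iff {g : GL ι F} {x : ℙ F (ι → F)} :
    g • x ∈ rationalPoints k F ι ↔
      ∃ (u : ι → k) (c : F), g.1 *ᵥ x.rep = c • (algebraMap k F ∘ u) := by
  conv_lhs => rw [← x.mk_rep, Projectivization.smul_mk, mk_mem_rationalPoints_iff]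
  rfl

/-- The hypothesis at the basis vectors makes `g` a rational matrix times a diagonal one; at the
all-ones vector it makes that diagonal matrix rational up to a common factor. -/
lemma exists_eq_smul_map {g : GL ι F}
    (hg : ∀ u : ι → k, ∃ (w : ι → k) (c : F),
      g.1 *ᵥ (algebraMap k F ∘ u) = c • (algebraMap k F ∘ w)) :
    ∃ (A : Matrix ι ι k) (d : F), g.1 = d • A.map (algebraMap k F) := by
  choose U c hU using fun i => hg (Pi.single i 1)
  obtain ⟨w, d, hw⟩ := hg 1
  let M : Matrix ι ι k := of fun i j => U j i
  have hgM : g.1 = M.map (algebraMap k F) * diagonal c := by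
    ext i j
    have h1 : algebraMap k F ∘ Pi.single j 1 = Pi.single j 1 := by
      ext l; simp [Pi.single_apply, apply_ite]
    simpa [h1, M, mul_comm] using congrFun (hU j) i
  have hM : IsUnit M.det := by
    refine isUnit_iff_ne_zero.2 fun h0 => g.det_ne_zero ?_
    rw [hgM, det_mul, ← RingHom.mapMatrix_apply, ← RingHom.map_det, h0, map_zero, zero_mul]
  have hc : c = d • (algebraMap k F ∘ (M⁻¹ *ᵥ w)) := by
    have hMc : M.map (algebraMap k F) *ᵥ c = d • (algebraMap k F ∘ w) := by
      rw [← hw, hgM, ← mulVec_mulVec]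
      congr 1
      ext i
      simp [mulVec_diagonal]
    have hinv : M⁻¹.map (algebraMap k F) * M.map (algebraMap k F) = 1 := by
      rw [← Matrix.map_mul, nonsing_inv_mul M hM, Matrix.map_one _ (map_zero _) (map_one _)]
    calc c = M⁻¹.map (algebraMap k F) *ᵥ (d • (algebraMap k F ∘ w)) := by
          rw [← hMc, mulVec_mulVec, hinv, one_mulVec]
      _ = d • (algebraMap k F ∘ (M⁻¹ *ᵥ w)) := by
          rw [mulVec_smul, map_mulVec_comp]
  refine ⟨M * diagonal (M⁻¹ *ᵥ w), d, ?_⟩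
  rw [hgM, Matrix.map_mul, diagonal_map (map_zero _), ← Matrix.mul_smul, ← diagonal_smul, hc]
  rfl

lemma map_smul_rationalPoints_subset (A : GL ι k) :
    GeneralLinearGroup.map (algebraMap k F) A • rationalPoints k F ι ⊆ rationalPoints k F ι := by
  rintro _ ⟨x, ⟨u, c, hx⟩, rfl⟩
  refine smul_mem_rationalPoints_iff.2 ⟨A.1 *ᵥ u, c, ?_⟩
  rw [hx, mulVec_smul]
  exact congrArg (c • ·) (map_mulVec_comp _ A.1 u)

lemma stabilizer_rationalPoints [Nonempty ι] :
    MulAction.stabilizer PGL(ι, F) (rationalPoints k F ι) =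
      (ProjGenLinGroup.map (n := ι) (algebraMap k F)).range := by
  ext h
  constructor
  · intro hh
    obtain ⟨g, rfl⟩ := ProjGenLinGroup.mk_surjective h
    obtain ⟨A, d, hA⟩ : ∃ (A : Matrix ι ι k) (d : F), g.1 = d • A.map (algebraMap k F) := by
      refine exists_eq_smul_map fun u => ?_
      rcases eq_or_ne (algebraMap k F ∘ u) 0 with hu | hu
      · exact ⟨0, 0, by simp [hu]⟩
      have hmem := Set.smul_mem_smul_set (a := ProjGenLinGroup.mk g)
        ((mk_mem_rationalPoints_iff hu).2 ⟨u, 1, (one_smul F _).symm⟩)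
      rw [MulAction.mem_stabilizer_iff.1 hh] at hmem
      exact (mk_mem_rationalPoints_iff _).1 hmem
    have hA0 : A.det ≠ 0 := fun h0 => g.det_ne_zero <| by
      rw [hA, det_smul, ← RingHom.mapMatrix_apply, ← RingHom.map_det, h0, map_zero, mul_zero]
    exact ⟨.mk (.mkOfDetNeZero A hA0), (mk_eq_mk_iff_exists_eq_smul.2 ⟨d, hA⟩).symm⟩
  · rintro ⟨h', rfl⟩
    obtain ⟨A, rfl⟩ := ProjGenLinGroup.mk_surjective h'
    exact (map_smul_rationalPoints_subset A).antisymm <|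
      Set.subset_smul_set_iff.2 (map_inv (GeneralLinearGroup.map (algebraMap k F)) A ▸
        map_smul_rationalPoints_subset A⁻¹)

lemma existsUnique_smul_rationalPoints_eq_and_smul_eq [Nonempty ι]
    (hF : Module.finrank k F = Fintype.card ι + 1) {x y : ℙ F (ι → F)}
    (hx : LinearIndependent k x.rep) (hy : LinearIndependent k y.rep) :
    ∃! h : PGL(ι, F), h • rationalPoints k F ι = rationalPoints k F ι ∧ h • x = y := by
  simp only [← MulAction.mem_stabilizer_iff, stabilizer_rationalPoints]
  refine existsUnique_of_exists_of_unique ?_ fun h₁ h₂ ⟨hR₁, hx₁⟩ ⟨hR₂, hx₂⟩ => ?_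
  · obtain ⟨A, l, hA⟩ := exists_map_mulVec_eq_smul hF hx hy
    exact ⟨_, ⟨.mk A, rfl⟩, smul_eq_iff_exists_mulVec_rep_eq_smul.2 ⟨l, hA⟩⟩
  have hx₁₂ : (h₂⁻¹ * h₁) • x = x := by rw [mul_smul, hx₁, ← hx₂, inv_smul_smul]
  obtain ⟨h, hh⟩ := mul_mem (inv_mem hR₂) hR₁
  obtain ⟨A, rfl⟩ := ProjGenLinGroup.mk_surjective h
  rw [← hh] at hx₁₂
  obtain ⟨l, hl⟩ := smul_eq_iff_exists_mulVec_rep_eq_smul.1 hx₁₂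
  have hA : ProjGenLinGroup.mk A = .mk 1 :=
    mk_eq_mk_iff_exists_eq_smul.2 (eq_smul_one_of_map_mulVec_eq_smul hF hx hl)
  rw [hA, map_one, map_one, eq_comm, inv_mul_eq_one] at hh
  exact hh.symm

end RationalPoints

section RegularDuality

variable {G Ω : Type*} [Group G] [MulAction G Ω] {S : Set Ω}

variable (G S) in
/-- The setwise stabilizer of `S` in `G` acts regularly (simply transitively) on the complement
of `S`: the existence of `h` is transitivity, its uniqueness is freeness. -/
def StabilizerRegularOnCompl : Prop :=
  ∀ x ∉ S, ∀ y ∉ S, ∃! h : G, h • S = S ∧ h • x = y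

/-- `m` carries `a • S` to `b • S` and fixes `P` iff `b⁻¹ * m * a` preserves `S` and carries
`a⁻¹ • P` to `b⁻¹ • P`. -/
lemma existsUnique_smul_eq_and_smul_set_eq
    (hS : StabilizerRegularOnCompl G S) {P : Ω} {T₁ T₂ : Set Ω}
    (hT₁ : T₁ ∈ MulAction.orbit G S) (hP₁ : P ∉ T₁) (hT₂ : T₂ ∈ MulAction.orbit G S)
    (hP₂ : P ∉ T₂) : ∃! m : G, m • P = P ∧ m • T₁ = T₂ := by
  obtain ⟨a, rfl⟩ := hT₁
  obtain ⟨b, rfl⟩ := hT₂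
  obtain ⟨h, ⟨hhS, hhP⟩, huniq⟩ := hS (a⁻¹ • P) (mt Set.mem_smul_set_iff_inv_smul_mem.2 hP₁)
    (b⁻¹ • P) (mt Set.mem_smul_set_iff_inv_smul_mem.2 hP₂)
  refine ⟨b * h * a⁻¹, ⟨?_, ?_⟩, fun m ⟨hmP, hmT⟩ => ?_⟩
  · rw [mul_smul, mul_smul, hhP, smul_inv_smul]
  · simp only [mul_smul, inv_smul_smul, hhS]
  · have hconj : b⁻¹ * m * a = h := by
      refine huniq _ ⟨?_, ?_⟩
      · rw [mul_smul, mul_smul, hmT, inv_smul_smul]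
      · rw [mul_smul, mul_smul, smul_inv_smul, hmP]
    rw [← hconj]
    group

lemma nonempty_stabilizer_equiv_orbit_avoiding
    (hS : StabilizerRegularOnCompl G S) {P : Ω}
    (hP : ∃ T ∈ MulAction.orbit G S, P ∉ T) :
    Nonempty (MulAction.stabilizer G P ≃ {T | T ∈ MulAction.orbit G S ∧ P ∉ T}) := by
  obtain ⟨T₀, hT₀, hPT₀⟩ := hP
  have hmaps (m : MulAction.stabilizer G P) :
      (m : G) • T₀ ∈ MulAction.orbit G S ∧ P ∉ (m : G) • T₀ := by
    refine ⟨MulAction.mem_orbit_of_mem_orbit (m : G) hT₀, ?_⟩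
    rwa [Set.mem_smul_set_iff_inv_smul_mem, MulAction.mem_stabilizer_iff.1 (inv_mem m.2)]
  refine ⟨.ofBijective (fun m => ⟨(m : G) • T₀, hmaps m⟩) ⟨fun m₁ m₂ h => ?_, ?_⟩⟩
  · obtain ⟨hT₁, hPT₁⟩ := hmaps m₁
    exact Subtype.ext ((existsUnique_smul_eq_and_smul_set_eq hS hT₀ hPT₀ hT₁ hPT₁).unique
      ⟨m₁.2, rfl⟩ ⟨m₂.2, (congrArg Subtype.val h).symm⟩)
  · rintro ⟨T, hT, hPT⟩
    obtain ⟨m, ⟨hm, hmT⟩, -⟩ := existsUnique_smul_eq_and_smul_set_eq hS hT₀ hPT₀ hT hPT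
    exact ⟨⟨m, hm⟩, Subtype.ext hmT⟩

end RegularDuality

lemma stabilizerRegularOnCompl_rationalPoints {k F : Type*} [Field k] [Field F] [Algebra k F]
    (h3 : Module.finrank k F = 3) :
    StabilizerRegularOnCompl PGL(2, F) (rationalPoints k F (Fin 2)) := by
  intro x hx y hy
  rw [← x.mk_rep, mk_notMem_rationalPoints_iff] at hx
  rw [← y.mk_rep, mk_notMem_rationalPoints_iff] at hy
  exact existsUnique_smul_rationalPoints_eq_and_smul_eq h3 hx hy

section AffineGroup

variable {F : Type*} [Field F]

/-- The homography `t ↦ a t + b` of the projective line, where `[t : 1]` is identified with `t`.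
These parametrize the stabilizer of the point at infinity. -/
def affineHomography (p : F × Fˣ) : PGL(2, F) :=
  .mk (.mkOfDetNeZero !![(p.2 : F), p.1; 0, 1] (by simp))

lemma affineHomography_injective : Function.Injective (affineHomography (F := F)) := by
  rintro ⟨b, a⟩ ⟨b', a'⟩ h
  obtain ⟨c, hc⟩ := mk_eq_mk_iff_exists_eq_smul.1 h
  have hentry (i j : Fin 2) := congrFun (congrFun hc i) j
  have hc1 : 1 = c := by simpa using hentry 1 1
  subst hc1
  have hb : b = b' := by simpa using hentry 0 1
  have ha : (a : F) = a' := by simpa using hentry 0 0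
  exact Prod.ext hb (Units.ext ha)

variable (F) in
/-- The point `[1 : 0]` of the projective line, the representative point at which the
order of a point stabilizer is computed. -/
def pointAtInfinity : ℙ F (Fin 2 → F) :=
  .mk F ![1, 0] (by simp)

lemma smul_pointAtInfinity_eq_iff {g : GL (Fin 2) F} :
    g • pointAtInfinity F = pointAtInfinity F ↔ g.1 1 0 = 0 := by
  rw [pointAtInfinity, Projectivization.smul_mk, Projectivization.mk_eq_mk_iff']
  constructor
  · rintro ⟨a, ha⟩
    simpa [GeneralLinearGroup.fin_two_smul, eq_comm] using congrFun ha 1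
  · intro h
    refine ⟨g.1 0 0, ?_⟩
    ext i
    fin_cases i <;> simp [h, GeneralLinearGroup.fin_two_smul]

lemma range_affineHomography :
    Set.range (affineHomography (F := F)) = MulAction.stabilizer PGL(2, F) (pointAtInfinity F) := by
  ext h
  constructor
  · rintro ⟨p, rfl⟩
    exact smul_pointAtInfinity_eq_iff.2 (by simp)
  · intro hh
    obtain ⟨g, rfl⟩ := ProjGenLinGroup.mk_surjective h
    have hg10 : g.1 1 0 = 0 := smul_pointAtInfinity_eq_iff.1 hh
    have hdet : g.1 0 0 * g.1 1 1 ≠ 0 := by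
      simpa [det_fin_two, hg10] using g.det_ne_zero
    obtain ⟨hg00, hg11⟩ := mul_ne_zero_iff.1 hdet
    refine ⟨(g.1 0 1 / g.1 1 1, .mk0 (g.1 0 0 / g.1 1 1) (div_ne_zero hg00 hg11)),
      mk_eq_mk_iff_exists_eq_smul.2 ⟨(g.1 1 1)⁻¹, ?_⟩⟩
    ext i j
    fin_cases i <;> fin_cases j <;> simp [hg10, hg11, div_eq_inv_mul]

lemma nonempty_stabilizer_equiv_prod_units (P : ℙ F (Fin 2 → F)) :
    Nonempty (MulAction.stabilizer PGL(2, F) P ≃ F × Fˣ) := by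
  obtain ⟨g, hg⟩ := MulAction.exists_smul_eq PGL(2, F) P (pointAtInfinity F)
  exact ⟨(MulAction.stabilizerEquivStabilizer hg.symm).toEquiv.trans <|
    (Equiv.setCongr range_affineHomography.symm).trans
      (Equiv.ofInjective _ affineHomography_injective).symm⟩

end AffineGroup

section Subline

variable {k F : Type} [Field k] [Field F] [Algebra k F]

lemma subline_eq_smul_rationalPoints (g : GL (Fin 2) F) :
    Subline k F g = g • rationalPoints k F (Fin 2) := by
  ext x
  rw [Set.mem_smul_set_iff_inv_smul_mem, smul_mem_rationalPoints_iff]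
  have hinv (v w : Fin 2 → F) : g⁻¹.1 *ᵥ v = w ↔ v = g.1 *ᵥ w :=
    show g⁻¹ • v = w ↔ v = g • w from inv_smul_eq_iff
  simp only [hinv, mulVec_smul]
  constructor
  · rintro ⟨v, -, c, -, h⟩
    exact ⟨v, c, h⟩
  · rintro ⟨v, c, h⟩
    refine ⟨v, ?_, c, ?_, h⟩
    · rintro rfl
      exact x.rep_nonzero (by simp [h, Function.comp_def])
    · rintro rfl
      exact x.rep_nonzero (by simp [h])

lemma imgSet_eq_smul (g : GL (Fin 2) F) (S : Set (ℙ F (Fin 2 → F))) : ImgSet F g S = g • S := by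
  ext y
  simp only [ImgSet, Set.mem_smul_set, smul_eq_iff_exists_rep_eq_smul_mulVec]
  rfl

lemma exists_eq_subline_iff {S : Set (ℙ F (Fin 2 → F))} :
    (∃ g, S = Subline k F g) ↔
      S ∈ MulAction.orbit PGL(2, F) (rationalPoints k F (Fin 2)) := by
  simp only [subline_eq_smul_rationalPoints, MulAction.mem_orbit_iff,
    ProjGenLinGroup.mk_surjective.exists, eq_comm]
  rfl

lemma exists_mem_orbit_rationalPoints_notMem (hF : 2 ≤ Module.finrank k F)
    (P : ℙ F (Fin 2 → F)) :
    ∃ T ∈ MulAction.orbit PGL(2, F) (rationalPoints k F (Fin 2)), P ∉ T := by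
  obtain ⟨v, hv⟩ := exists_linearIndependent_of_le_finrank hF
  have hv0 : v ≠ 0 := fun h => hv.ne_zero 0 (congrFun h 0)
  obtain ⟨g, rfl⟩ := MulAction.exists_smul_eq PGL(2, F) (.mk F v hv0) P
  exact ⟨g • rationalPoints k F (Fin 2), ⟨g, rfl⟩,
    mt Set.smul_mem_smul_set_iff.1 ((mk_notMem_rationalPoints_iff hv0).2 hv)⟩

end Subline

theorem stmt17_general (k F : Type) [Field k] [Field F] [Algebra k F]
    (h3 : Module.finrank k F = 3) (P : Projectivization F (Fin 2 → F)) :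
    ∃ K : Subgroup (GL (Fin 2) F),
      (∀ g : GL (Fin 2) F, g ∈ K ↔ ∃ c : F,
        (g : Matrix (Fin 2) (Fin 2) F).mulVec P.rep = c • P.rep) ∧
      Nonempty (Subgroup.map (QuotientGroup.mk' (Subgroup.center (GL (Fin 2) F))) K ≃ F × Fˣ) ∧
      Nonempty ({S : Set (Projectivization F (Fin 2 → F)) |
          (∃ g : GL (Fin 2) F, S = Subline k F g) ∧ P ∉ S} ≃ F × Fˣ) ∧
      ∀ S T : Set (Projectivization F (Fin 2 → F)),
        (∃ g : GL (Fin 2) F, S = Subline k F g) → P ∉ S →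
        (∃ g : GL (Fin 2) F, T = Subline k F g) → P ∉ T →
        (∃ g ∈ K, ImgSet F g S = T) ∧
        (∀ g₁ ∈ K, ∀ g₂ ∈ K, ImgSet F g₁ S = T → ImgSet F g₂ S = T →
          ∃ a : F, (g₁ : Matrix (Fin 2) (Fin 2) F)
            = a • (g₂ : Matrix (Fin 2) (Fin 2) F)) := by
  have hreg := stabilizerRegularOnCompl_rationalPoints h3
  obtain ⟨e⟩ := nonempty_stabilizer_equiv_prod_units P
  obtain ⟨e'⟩ := nonempty_stabilizer_equiv_orbit_avoiding hreg
    (exists_mem_orbit_rationalPoints_notMem (by lia) P)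
  refine ⟨MulAction.stabilizer _ P, fun g => smul_eq_iff_exists_mulVec_rep_eq_smul, ?_, ?_,
    fun S T hS hPS hT hPT => ?_⟩
  · rw [map_mk_stabilizer]
    exact ⟨e⟩
  · simp only [exists_eq_subline_iff]
    exact ⟨e'.symm.trans e⟩
  · rw [exists_eq_subline_iff] at hS hT
    have hST := existsUnique_smul_eq_and_smul_set_eq hreg hS hPS hT hPT
    obtain ⟨m, hm⟩ := hST.exists
    obtain ⟨g, rfl⟩ := ProjGenLinGroup.mk_surjective m
    simp only [imgSet_eq_smul]
    exact ⟨⟨g, hm⟩, fun g₁ h₁ g₂ h₂ hT₁ hT₂ =>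
      mk_eq_mk_iff_exists_eq_smul.1 (hST.unique ⟨h₁, hT₁⟩ ⟨h₂, hT₂⟩)⟩

lemma finrank_eq_of_card_eq_pow {k V : Type*} [Field k] [AddCommGroup V] [Module k V] [Fintype k]
    [Fintype V] {n : ℕ} (h : Fintype.card V = Fintype.card k ^ n) : Module.finrank k V = n :=
  Nat.pow_right_injective Fintype.one_lt_card (Module.card_eq_pow_finrank.symm.trans h)

lemma card_prod_units (F : Type*) [Field F] [Fintype F] :
    Nat.card (F × Fˣ) = Fintype.card F * (Fintype.card F - 1) := by
  rw [Nat.card_prod, Nat.card_units, Nat.card_eq_fintype_card]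

/-- The stabilizer K of a point P in PGL(2,q^3) has order q^3(q^3-1),
there are exactly q^3(q^3-1) order-q-sublines not containing P, and K acts regularly
(transitively, with uniqueness up to scalars) on them. -/
theorem stmt17 (p n q : ℕ) (hp : p.Prime) (hn : 0 < n) (hq : q = p ^ n)
    (k F : Type) [Field k] [Field F] [Algebra k F] [Fintype k] [Fintype F]
    (hk : Fintype.card k = q) (hF : Fintype.card F = q ^ 3)
    (P : Projectivization F (Fin 2 → F)) :
    ∃ K : Subgroup (GL (Fin 2) F),
      (∀ g : GL (Fin 2) F, g ∈ K ↔ ∃ c : F,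
        (g : Matrix (Fin 2) (Fin 2) F).mulVec P.rep = c • P.rep) ∧
      Nat.card (Subgroup.map (QuotientGroup.mk' (Subgroup.center (GL (Fin 2) F))) K)
        = q ^ 3 * (q ^ 3 - 1) ∧
      Set.ncard {S : Set (Projectivization F (Fin 2 → F)) |
          (∃ g : GL (Fin 2) F, S = Subline k F g) ∧ P ∉ S} = q ^ 3 * (q ^ 3 - 1) ∧
      ∀ S T : Set (Projectivization F (Fin 2 → F)),
        (∃ g : GL (Fin 2) F, S = Subline k F g) → P ∉ S →
        (∃ g : GL (Fin 2) F, T = Subline k F g) → P ∉ T →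
        (∃ g ∈ K, ImgSet F g S = T) ∧
        (∀ g₁ ∈ K, ∀ g₂ ∈ K, ImgSet F g₁ S = T → ImgSet F g₂ S = T →
          ∃ a : F, (g₁ : Matrix (Fin 2) (Fin 2) F)
            = a • (g₂ : Matrix (Fin 2) (Fin 2) F)) := by
  obtain ⟨K, hK, ⟨eK⟩, ⟨eS⟩, hreg⟩ := stmt17_general k F (finrank_eq_of_card_eq_pow (hk ▸ hF)) P
  have hcard := hF ▸ card_prod_units F
  exact ⟨K, hK, (Nat.card_congr eK).trans hcard,
    (Nat.card_coe_set_eq _).symm.trans ((Nat.card_congr eS).trans hcard), hreg⟩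
end
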